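/- arXiv:1508.03349 — 2 statements merged into one kernel-verified Lean document; each statement's English description precedes it below -/
import Mathlib

section
/- Conditional Chebyshev covering bound: In the covering setup, if (u₀,u_{k+1}) satisfies P(F(u₀,u_{k+1})) ≥ 1 − ε, then P(Z = 0 | u₀, u_{k+1}) ≤ (1/(1−ε)) |M|^{−1} e^{γ} + (1/(1−ε)²) ∑_{∅⊊S⊊[k]} |M_S|^{−1} e^{−α_S − 2β_{S^c} + 2γ}. -/
/-!
Let `Z` count the index tuples whose codewords fall in the target set `G`. Chebyshev's inequality
gives `P(Z = 0) (E Z)² ≤ E Z² - (E Z)²`. In `E Z²`, sort the pairs of index tuples by the set `S` of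
coordinates on which they agree: a proportion at most `|M_S|⁻¹` of all pairs agrees on `S`, and by
pairwise independence the probability that both codewords of such a pair hit `G` depends only on
`S`. The class `S = ∅` contributes at most `(E Z)²`, the class `S = [k]` is `E Z`, and in the
remaining classes the hitting probability is at most `exp (-α_S - 2 β_{Sᶜ})`: `α_S` and one
`β_{Sᶜ}` turn the product law of the first codeword into the joint law, the other `β_{Sᶜ}` bounds
the conditional probability that the second codeword hits `G`. Finally `γ` bounds `E Z` from below.
-/

open Finset Real

/-- Marginal of the joint pmf `p` onto `(u₀, (u_j)_{j∈S}, u_{k+1})`,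
evaluated at a full tuple `z`. -/
def cvMargS {k : ℕ} {Ω₀ B : Type*} {A : Fin k → Type*}
    [Fintype Ω₀] [Fintype B] [∀ j, Fintype (A j)]
    [DecidableEq Ω₀] [DecidableEq B] [∀ j, DecidableEq (A j)]
    (p : Ω₀ × (∀ j, A j) × B → ℝ) (S : Finset (Fin k))
    (z : Ω₀ × (∀ j, A j) × B) : ℝ :=
  ∑ w ∈ Finset.univ.filter (fun w : Ω₀ × (∀ j, A j) × B =>
    w.1 = z.1 ∧ (∀ j ∈ S, w.2.1 j = z.2.1 j) ∧ w.2.2 = z.2.2), p w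

/-- Projection `F_S` of `F` onto the `(u₀, u_S, u_{k+1})` coordinates. -/
def cvProjS {k : ℕ} {Ω₀ B : Type*} {A : Fin k → Type*}
    (F : Set (Ω₀ × (∀ j, A j) × B)) (S : Finset (Fin k)) :
    Set (Ω₀ × (∀ j, A j) × B) :=
  {z | ∃ y : ∀ j, A j, (∀ j ∈ S, y j = z.2.1 j) ∧ (z.1, y, z.2.2) ∈ F}

section Chebyshev

variable {C R : Type*} [Fintype C] [CommRing R] {w : C → R}

theorem sum_mul_sub_sq_eq (hw : ∑ c, w c = 1) (Z : C → R) :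
    ∑ c, w c * (Z c - ∑ c', w c' * Z c') ^ 2 =
      ∑ c, w c * Z c ^ 2 - (∑ c, w c * Z c) ^ 2 := by
  set e := ∑ c, w c * Z c with he
  calc ∑ c, w c * (Z c - e) ^ 2
      = ∑ c, (w c * Z c ^ 2 - 2 * e * (w c * Z c) + e ^ 2 * w c) :=
        sum_congr rfl fun c _ => by ring
    _ = ∑ c, w c * Z c ^ 2 - 2 * e * e + e ^ 2 * 1 := by
        rw [sum_add_distrib, sum_sub_distrib, ← mul_sum, ← mul_sum, ← he, hw]
    _ = ∑ c, w c * Z c ^ 2 - e ^ 2 := by ring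

theorem sum_filter_eq_zero_mul_sq_le [LinearOrder R] [IsStrictOrderedRing R]
    (hw : w ∈ stdSimplex R C) (Z : C → R) :
    (∑ c with Z c = 0, w c) * (∑ c, w c * Z c) ^ 2 ≤
      ∑ c, w c * Z c ^ 2 - (∑ c, w c * Z c) ^ 2 := by
  rw [← sum_mul_sub_sq_eq hw.2]
  set e := ∑ c, w c * Z c
  calc (∑ c with Z c = 0, w c) * e ^ 2
      = ∑ c with Z c = 0, w c * (Z c - e) ^ 2 := by
        rw [sum_mul]
        exact sum_congr rfl fun c hc => by rw [(mem_filter.1 hc).2, zero_sub, neg_sq]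
    _ ≤ ∑ c, w c * (Z c - e) ^ 2 :=
        sum_le_univ_sum_of_nonneg fun c => mul_nonneg (hw.1 c) (sq_nonneg _)

end Chebyshev

theorem sum_finset_le_add_add_sum_proper {ι N : Type*} [Fintype ι] [DecidableEq ι]
    [AddCommMonoid N] [PartialOrder N] [IsOrderedAddMonoid N] {f : Finset ι → N}
    (hf : ∀ S, 0 ≤ f S) :
    ∑ S, f S ≤ f ∅ + f univ + ∑ S with S.Nonempty ∧ S ≠ univ, f S := by
  have pointwise (S : Finset ι) :
      f S ≤ (if S = ∅ then f S else 0) + (if S = univ then f S else 0) +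
        if S.Nonempty ∧ S ≠ univ then f S else 0 := by
    have ite_nonneg (p : Prop) [Decidable p] : 0 ≤ if p then f S else 0 := by
      split_ifs <;> simp [hf S]
    by_cases hempty : S = ∅
    · rw [if_pos hempty, add_assoc]
      exact le_add_of_nonneg_right (add_nonneg (ite_nonneg _) (ite_nonneg _))
    by_cases huniv : S = univ
    · rw [if_neg hempty, zero_add, if_pos huniv]
      exact le_add_of_nonneg_right (ite_nonneg _)
    · simp [hempty, huniv, nonempty_iff_ne_empty]
  refine (sum_le_sum fun S _ => pointwise S).trans_eq ?_
  rw [sum_add_distrib, sum_add_distrib, sum_filter]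
  simp only [sum_ite_eq', mem_univ, if_true]

theorem card_filter_forall_mem_eq {ι : Type*} [Fintype ι] [DecidableEq ι] {M : ι → Type*}
    [∀ i, Fintype (M i)] [∀ i, DecidableEq (M i)] (S : Finset ι) (m : ∀ i, M i) :
    #{m' : ∀ i, M i | ∀ i ∈ S, m i = m' i} = ∏ i ∈ Sᶜ, Fintype.card (M i) := by
  have eq_piFinset : ({m' | ∀ i ∈ S, m i = m' i} : Finset (∀ i, M i)) =
      Fintype.piFinset fun i => if i ∈ S then {m i} else univ := by
    ext m'
    simp only [mem_filter_univ, Fintype.mem_piFinset]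
    refine forall_congr' fun i => ?_
    split_ifs with hi <;> simp [hi, eq_comm]
  rw [eq_piFinset, Fintype.card_piFinset, ← prod_mul_prod_compl S,
    prod_eq_one fun i hi => by simp [hi], one_mul]
  exact prod_congr rfl fun i hi => by simp [mem_compl.1 hi]

section MassOfAgreement

variable {ι : Type*} [Fintype ι] [DecidableEq ι] {A : ι → Type*} [∀ i, DecidableEq (A i)]

/-- The marginal on the coordinates in `S` of the weight `r`, evaluated at `(x i)_{i ∈ S}`; the
other coordinates of `x` are irrelevant. -/
def marginalMass [∀ i, Fintype (A i)] (r : (∀ i, A i) → ℝ) (S : Finset ι) (x : ∀ i, A i) : ℝ :=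
  ∑ y with ∀ i ∈ S, y i = x i, r y

@[simp]
theorem marginalMass_empty [∀ i, Fintype (A i)] (r : (∀ i, A i) → ℝ) (x : ∀ i, A i) :
    marginalMass r ∅ x = ∑ y, r y := by
  simp [marginalMass]

theorem marginalMass_congr [∀ i, Fintype (A i)] (r : (∀ i, A i) → ℝ) {S : Finset ι}
    {x x' : ∀ i, A i} (h : ∀ i ∈ S, x' i = x i) : marginalMass r S x' = marginalMass r S x := by
  refine sum_congr (filter_congr fun y _ => forall₂_congr fun i hi => ?_) fun _ _ => rfl
  rw [h i hi]

variable (q : ∀ i, A i → ℝ) (G : Finset (∀ i, A i))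

/-- The probability that `X` and `X'` both lie in `G`, where `X` has independent coordinates with
laws `q i`, and `X'` copies the coordinates of `X` in `S` and resamples the others independently. -/
def overlapMass (S : Finset ι) : ℝ :=
  ∑ x ∈ G, (∏ i, q i (x i)) * ∑ x' ∈ G with ∀ i ∈ S, x' i = x i, ∏ i ∈ Sᶜ, q i (x' i)

theorem overlapMass_empty : overlapMass q G ∅ = (∑ x ∈ G, ∏ i, q i (x i)) ^ 2 := by
  simp [overlapMass, sq, sum_mul]

theorem overlapMass_univ : overlapMass q G univ = ∑ x ∈ G, ∏ i, q i (x i) := by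
  refine sum_congr rfl fun x hx => ?_
  simp [← funext_iff, filter_eq', hx]

variable {q}

theorem overlapMass_nonneg (hq : ∀ i a, 0 ≤ q i a) (S : Finset ι) : 0 ≤ overlapMass q G S :=
  sum_nonneg fun x _ => mul_nonneg (prod_nonneg fun i _ => hq i (x i)) <|
    sum_nonneg fun x' _ => prod_nonneg fun i _ => hq i (x' i)

variable {G}

theorem mul_marginalMass_mul_sum_le [∀ i, Fintype (A i)] {r : (∀ i, A i) → ℝ} (hr : ∀ x, 0 ≤ r x)
    {S : Finset ι} {b : ℝ}
    (hb : ∀ x ∈ G, b * (marginalMass r S x * ∏ i ∈ Sᶜ, q i (x i)) ≤ r x) (x : ∀ i, A i) :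
    b * (marginalMass r S x * ∑ x' ∈ G with ∀ i ∈ S, x' i = x i, ∏ i ∈ Sᶜ, q i (x' i)) ≤
      marginalMass r S x := by
  rw [mul_sum, mul_sum]
  calc ∑ x' ∈ G with ∀ i ∈ S, x' i = x i, b * (marginalMass r S x * ∏ i ∈ Sᶜ, q i (x' i))
      ≤ ∑ x' ∈ G with ∀ i ∈ S, x' i = x i, r x' := by
        refine sum_le_sum fun x' hx' => ?_
        obtain ⟨hG, hagree⟩ := mem_filter.1 hx'
        rw [← marginalMass_congr r hagree]
        exact hb x' hG
    _ ≤ marginalMass r S x :=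
        sum_le_sum_of_subset_of_nonneg (by gcongr; exact subset_univ G) fun y _ _ => hr y

theorem mul_overlapMass_le [∀ i, Fintype (A i)] {r : (∀ i, A i) → ℝ} (hr : ∀ x, 0 ≤ r x)
    (hq : ∀ i a, 0 ≤ q i a) {S : Finset ι} {a b d : ℝ} (hb0 : 0 ≤ b)
    (ha : ∀ x ∈ G, a * (d * ∏ i ∈ S, q i (x i)) ≤ marginalMass r S x)
    (hb : ∀ x ∈ G, b * (marginalMass r S x * ∏ i ∈ Sᶜ, q i (x i)) ≤ r x) :
    a * b ^ 2 * (d * overlapMass q G S) ≤ ∑ x ∈ G, r x := by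
  rw [overlapMass, mul_sum, mul_sum]
  refine sum_le_sum fun x hx => ?_
  set N := marginalMass r S x
  set t := ∏ i ∈ Sᶜ, q i (x i)
  set I := ∑ x' ∈ G with ∀ i ∈ S, x' i = x i, ∏ i ∈ Sᶜ, q i (x' i)
  have ht : 0 ≤ t := prod_nonneg fun i _ => hq i (x i)
  have hI : 0 ≤ I := sum_nonneg fun x' _ => prod_nonneg fun i _ => hq i (x' i)
  calc a * b ^ 2 * (d * ((∏ i, q i (x i)) * I))
      = b ^ 2 * t * I * (a * (d * ∏ i ∈ S, q i (x i))) := by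
        rw [← prod_mul_prod_compl S]; ring
    _ ≤ b ^ 2 * t * I * N := by gcongr; exact ha x hx
    _ = b * t * (b * (N * I)) := by ring
    _ ≤ b * t * N := by gcongr; exact mul_marginalMass_mul_sum_le hr hb x
    _ = b * (N * t) := by ring
    _ ≤ r x := hb x hx

theorem overlapMass_le_exp [∀ i, Fintype (A i)] {r : (∀ i, A i) → ℝ} (hr : ∀ x, 0 ≤ r x)
    (hr_pos : 0 < ∑ x, r x) (hq : ∀ i a, 0 ≤ q i a) {S : Finset ι} {α β : ℝ}
    (hα : ∀ x ∈ G, exp α * ((∑ y, r y) * ∏ i ∈ S, q i (x i)) ≤ marginalMass r S x)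
    (hβ : ∀ x ∈ G, exp β * (marginalMass r S x * ∏ i ∈ Sᶜ, q i (x i)) ≤ r x) :
    overlapMass q G S ≤ exp (-α - 2 * β) := by
  have scaled : exp α * exp β ^ 2 * overlapMass q G S * ∑ x, r x ≤ 1 * ∑ x, r x := by
    calc exp α * exp β ^ 2 * overlapMass q G S * ∑ x, r x
        = exp α * exp β ^ 2 * ((∑ x, r x) * overlapMass q G S) := by ring
      _ ≤ ∑ x ∈ G, r x := mul_overlapMass_le hr hq (exp_pos β).le hα hβ
      _ ≤ 1 * ∑ x, r x := (sum_le_univ_sum_of_nonneg hr).trans_eq (one_mul _).symm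
  have exp_eq : exp (-α - 2 * β) = (exp α * exp β ^ 2)⁻¹ := by
    rw [← exp_nat_mul, ← exp_add, ← exp_neg]
    congr 1
    push_cast
    ring
  rw [exp_eq, ← one_div, le_div_iff₀' (by positivity)]
  exact le_of_mul_le_mul_right scaled hr_pos

end MassOfAgreement

theorem le_mul_sum_of_mul_le_sum {X : Type*} {r Q : X → ℝ} {G : Finset X} {δ K d : ℝ} (hd : 0 < d)
    (hr : ∀ x ∈ G, r x ≤ K * (d * Q x)) (hδ : δ * d ≤ ∑ x ∈ G, r x) :
    δ ≤ K * ∑ x ∈ G, Q x := by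
  refine le_of_mul_le_mul_right ?_ hd
  calc δ * d ≤ ∑ x ∈ G, r x := hδ
    _ ≤ ∑ x ∈ G, K * (d * Q x) := sum_le_sum hr
    _ = K * (∑ x ∈ G, Q x) * d := by rw [← mul_sum, ← mul_sum]; ring

section Codebook

variable {ι : Type*} {A M : ι → Type*}

/-- The tuple of codewords that the codebooks `c` assign to the index tuple `m`. -/
def codeword (c : ∀ i, M i → A i) (m : ∀ i, M i) : ∀ i, A i :=
  fun i => c i (m i)

variable [Fintype ι] [DecidableEq ι] [∀ i, Fintype (M i)] [∀ i, DecidableEq (A i)]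

/-- The random variable `Z` of the covering lemma: the number of index tuples whose codewords lie
in `G`. -/
def coverCount (G : Finset (∀ i, A i)) (c : ∀ i, M i → A i) : ℝ :=
  #{m | codeword c m ∈ G}

theorem coverCount_eq_sum (G : Finset (∀ i, A i)) (c : ∀ i, M i → A i) :
    coverCount G c = ∑ m, if codeword c m ∈ G then 1 else 0 := by
  rw [coverCount, sum_boole]

theorem coverCount_eq_zero_iff {G : Finset (∀ i, A i)} {c : ∀ i, M i → A i} :
    coverCount G c = 0 ↔ ∀ m, codeword c m ∉ G := by
  simp [coverCount, filter_eq_empty_iff]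

variable [∀ i, Fintype (A i)] [∀ i, DecidableEq (M i)]

theorem sum_mul_coverCount (ν : (∀ i, M i → A i) → ℝ) (G : Finset (∀ i, A i)) :
    ∑ c, ν c * coverCount G c = ∑ m, ∑ c with codeword c m ∈ G, ν c := by
  simp_rw [coverCount_eq_sum, mul_sum, mul_ite, mul_one, mul_zero, sum_filter]
  exact sum_comm

theorem sum_mul_coverCount_sq (ν : (∀ i, M i → A i) → ℝ) (G : Finset (∀ i, A i)) :
    ∑ c, ν c * coverCount G c ^ 2 =
      ∑ m, ∑ m', ∑ c with codeword c m ∈ G ∧ codeword c m' ∈ G, ν c := by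
  simp_rw [coverCount_eq_sum, sq, sum_mul_sum, mul_sum, ite_zero_mul_ite_zero, mul_ite, mul_one,
    mul_zero, sum_filter]
  rw [sum_comm]
  exact sum_congr rfl fun m _ => sum_comm

/-- Assumption I for a weight `ν` on codebooks: every codeword has independent coordinates with laws
`q i`, and two codewords are independent on the coordinates where their indices differ. -/
structure IsPairwiseIndepCodebook (q : ∀ i, A i → ℝ) (ν : (∀ i, M i → A i) → ℝ) : Prop where
  sum_codeword_eq (m : ∀ i, M i) (x : ∀ i, A i) :
    ∑ c with codeword c m = x, ν c = ∏ i, q i (x i)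
  sum_codeword_eq_and_eq (m m' : ∀ i, M i) (hm : m ≠ m') (x x' : ∀ i, A i)
    (hx : ∀ i, m i = m' i → x i = x' i) :
    ∑ c with codeword c m = x ∧ codeword c m' = x', ν c =
      (∏ i, q i (x i)) * ∏ i with m i ≠ m' i, q i (x' i)

namespace IsPairwiseIndepCodebook

variable {q : ∀ i, A i → ℝ} {ν : (∀ i, M i → A i) → ℝ} {G : Finset (∀ i, A i)}

theorem sum_codeword_mem (h : IsPairwiseIndepCodebook q ν) (m : ∀ i, M i) :
    ∑ c with codeword c m ∈ G, ν c = ∑ x ∈ G, ∏ i, q i (x i) := by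
  rw [← sum_fiberwise_eq_sum_filter]
  exact sum_congr rfl fun x _ => h.sum_codeword_eq m x

theorem sum_codeword_eq_and_eq_ite (h : IsPairwiseIndepCodebook q ν) (m m' : ∀ i, M i)
    (x x' : ∀ i, A i) :
    ∑ c with codeword c m = x ∧ codeword c m' = x', ν c =
      if ∀ i, m i = m' i → x' i = x i
        then (∏ i, q i (x i)) * ∏ i with m i ≠ m' i, q i (x' i) else 0 := by
  split_ifs with hagree
  · rcases eq_or_ne m m' with rfl | hm
    · obtain rfl : x' = x := funext fun i => hagree i rfl
      simpa using h.sum_codeword_eq m x'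
    · exact h.sum_codeword_eq_and_eq m m' hm x x' fun i hi => (hagree i hi).symm
  · refine sum_eq_zero fun c hc => (hagree fun i hi => ?_).elim
    obtain ⟨-, rfl, rfl⟩ := mem_filter.1 hc
    simp only [codeword, hi]

theorem sum_codeword_mem_and_mem (h : IsPairwiseIndepCodebook q ν) (m m' : ∀ i, M i) :
    ∑ c with codeword c m ∈ G ∧ codeword c m' ∈ G, ν c =
      overlapMass q G {i | m i = m' i} := by
  calc ∑ c with codeword c m ∈ G ∧ codeword c m' ∈ G, ν c
      = ∑ y ∈ G ×ˢ G, ∑ c with (codeword c m, codeword c m') = y, ν c := by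
        rw [sum_fiberwise_eq_sum_filter]
        simp only [mem_product]
    _ = ∑ x ∈ G, ∑ x' ∈ G, if ∀ i, m i = m' i → x' i = x i
          then (∏ i, q i (x i)) * ∏ i with m i ≠ m' i, q i (x' i) else 0 := by
        simp only [sum_product, Prod.mk.injEq, h.sum_codeword_eq_and_eq_ite]
    _ = overlapMass q G {i | m i = m' i} := by
        simp only [overlapMass, mul_sum, sum_filter, compl_filter, mem_filter_univ, mul_ite,
          mul_zero]

theorem sum_mul_coverCount_eq (h : IsPairwiseIndepCodebook q ν) :
    ∑ c, ν c * coverCount G c =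
      (∏ i, (Fintype.card (M i) : ℝ)) * ∑ x ∈ G, ∏ i, q i (x i) := by
  simp only [sum_mul_coverCount, h.sum_codeword_mem, sum_const, card_univ, Fintype.card_pi,
    nsmul_eq_mul, Nat.cast_prod]

variable [∀ i, Nonempty (M i)]

theorem sum_mul_coverCount_sq_le (h : IsPairwiseIndepCodebook q ν) (hq : ∀ i a, 0 ≤ q i a) :
    ∑ c, ν c * coverCount G c ^ 2 ≤
      (∏ i, (Fintype.card (M i) : ℝ)) ^ 2 *
        ∑ S, (∏ i ∈ S, (Fintype.card (M i) : ℝ))⁻¹ * overlapMass q G S := by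
  set W := ∏ i, (Fintype.card (M i) : ℝ) with hW
  have card_agree_le (m : ∀ i, M i) (S : Finset ι) :
      (#{m' : ∀ i, M i | ({i | m i = m' i} : Finset ι) = S} : ℝ) ≤
        W * (∏ i ∈ S, (Fintype.card (M i) : ℝ))⁻¹ := by
    have hS : ∏ i ∈ S, (Fintype.card (M i) : ℝ) ≠ 0 := prod_ne_zero_iff.2 fun i _ => by simp
    rw [hW, ← prod_mul_prod_compl S, mul_comm, inv_mul_cancel_left₀ hS, ← Nat.cast_prod,
      ← card_filter_forall_mem_eq S m]
    gcongr
    rintro rfl i hi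
    exact (mem_filter_univ i).1 hi
  have sum_agree_le (m : ∀ i, M i) :
      ∑ m' : ∀ i, M i, overlapMass q G {i | m i = m' i} ≤
        W * ∑ S, (∏ i ∈ S, (Fintype.card (M i) : ℝ))⁻¹ * overlapMass q G S := by
    rw [← sum_fiberwise' univ (fun m' : ∀ i, M i => ({i | m i = m' i} : Finset ι)), mul_sum]
    refine sum_le_sum fun S _ => ?_
    rw [sum_const, nsmul_eq_mul, ← mul_assoc]
    exact mul_le_mul_of_nonneg_right (card_agree_le m S) (overlapMass_nonneg G hq S)
  simp only [sum_mul_coverCount_sq, h.sum_codeword_mem_and_mem]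
  refine (sum_le_sum fun m _ => sum_agree_le m).trans_eq ?_
  rw [sum_const, card_univ, Fintype.card_pi, nsmul_eq_mul, Nat.cast_prod, ← hW]
  ring

theorem sum_uncovered_le (h : IsPairwiseIndepCodebook q ν) (hq : ∀ i a, 0 ≤ q i a)
    (hν : ν ∈ stdSimplex ℝ _) (hG : 0 < ∑ x ∈ G, ∏ i, q i (x i)) :
    ∑ c with ∀ m, codeword c m ∉ G, ν c ≤
      (∏ i, (Fintype.card (M i) : ℝ))⁻¹ * (∑ x ∈ G, ∏ i, q i (x i))⁻¹ +
        (∑ x ∈ G, ∏ i, q i (x i))⁻¹ ^ 2 * ∑ S with S.Nonempty ∧ S ≠ univ,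
          (∏ i ∈ S, (Fintype.card (M i) : ℝ))⁻¹ * overlapMass q G S := by
  have chebyshev := sum_filter_eq_zero_mul_sq_le hν (coverCount G)
  have second_moment := h.sum_mul_coverCount_sq_le (G := G) hq
  have split := sum_finset_le_add_add_sum_proper
    (f := fun S => (∏ i ∈ S, (Fintype.card (M i) : ℝ))⁻¹ * overlapMass q G S)
    fun S => mul_nonneg (by positivity) (overlapMass_nonneg G hq S)
  simp only [coverCount_eq_zero_iff, h.sum_mul_coverCount_eq] at chebyshev
  simp only [overlapMass_empty, overlapMass_univ, prod_empty, inv_one, one_mul] at split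
  have hW : 0 < ∏ i, (Fintype.card (M i) : ℝ) :=
    prod_pos fun i _ => Nat.cast_pos.2 Fintype.card_pos
  set W := ∏ i, (Fintype.card (M i) : ℝ)
  set μ := ∑ x ∈ G, ∏ i, q i (x i)
  set X := ∑ S with S.Nonempty ∧ S ≠ univ,
    (∏ i ∈ S, (Fintype.card (M i) : ℝ))⁻¹ * overlapMass q G S
  refine le_of_mul_le_mul_right ?_ (pow_pos (mul_pos hW hG) 2)
  calc (∑ c with ∀ m, codeword c m ∉ G, ν c) * (W * μ) ^ 2
      ≤ W ^ 2 * (μ ^ 2 + W⁻¹ * μ + X) - (W * μ) ^ 2 := by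
        refine chebyshev.trans (sub_le_sub_right (second_moment.trans ?_) _)
        gcongr
    _ = (W⁻¹ * μ⁻¹ + μ⁻¹ ^ 2 * X) * (W * μ) ^ 2 := by field_simp; ring

end IsPairwiseIndepCodebook

theorem covering_stmt15_general [∀ i, Nonempty (M i)] {r : (∀ i, A i) → ℝ} (hr : ∀ x, 0 ≤ r x)
    (hr_pos : 0 < ∑ x, r x) {q : ∀ i, A i → ℝ} (hq : ∀ i a, 0 ≤ q i a)
    {ν : (∀ i, M i → A i) → ℝ} (hν : ν ∈ stdSimplex ℝ _) (h : IsPairwiseIndepCodebook q ν)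
    {G : Finset (∀ i, A i)} {γ : ℝ} {α β : Finset ι → ℝ}
    (hγ : ∀ x ∈ G, r x ≤ exp γ * ((∑ y, r y) * ∏ i, q i (x i)))
    (hα : ∀ S : Finset ι, S.Nonempty → S ≠ univ → ∀ x ∈ G,
      exp (α S) * ((∑ y, r y) * ∏ i ∈ S, q i (x i)) ≤ marginalMass r S x)
    (hβ : ∀ S : Finset ι, S.Nonempty → S ≠ univ → ∀ x ∈ G,
      exp (β Sᶜ) * (marginalMass r S x * ∏ i ∈ Sᶜ, q i (x i)) ≤ r x)
    {ε : ℝ} (hε : ε < 1) (hgood : (1 - ε) * ∑ x, r x ≤ ∑ x ∈ G, r x) :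
    ∑ c with ∀ m, codeword c m ∉ G, ν c ≤
      1 / (1 - ε) * (∏ i, (Fintype.card (M i) : ℝ))⁻¹ * exp γ +
        (1 / (1 - ε)) ^ 2 * ∑ S with S.Nonempty ∧ S ≠ univ,
          (∏ i ∈ S, (Fintype.card (M i) : ℝ))⁻¹ * exp (-α S - 2 * β Sᶜ + 2 * γ) := by
  have hε' : 0 < 1 - ε := sub_pos.2 hε
  have first_moment := le_mul_sum_of_mul_le_sum hr_pos hγ hgood
  have hμ : 0 < ∑ x ∈ G, ∏ i, q i (x i) :=
    pos_of_mul_pos_right (hε'.trans_le first_moment) (exp_pos γ).le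
  have inv_le : (∑ x ∈ G, ∏ i, q i (x i))⁻¹ ≤ 1 / (1 - ε) * exp γ := by
    rw [inv_le_iff_one_le_mul₀ hμ, mul_assoc, one_div, ← div_eq_inv_mul, one_le_div hε']
    exact first_moment
  have overlap_le (S : Finset ι) (hS : S ∈ ({S | S.Nonempty ∧ S ≠ univ} : Finset (Finset ι))) :
      overlapMass q G S ≤ exp (-α S - 2 * β Sᶜ) :=
    have ⟨hne, hproper⟩ := (mem_filter_univ S).1 hS
    overlapMass_le_exp hr hr_pos hq (hα S hne hproper) (hβ S hne hproper)
  calc ∑ c with ∀ m, codeword c m ∉ G, ν c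
      ≤ (∏ i, (Fintype.card (M i) : ℝ))⁻¹ * (1 / (1 - ε) * exp γ) +
          (1 / (1 - ε) * exp γ) ^ 2 * ∑ S with S.Nonempty ∧ S ≠ univ,
            (∏ i ∈ S, (Fintype.card (M i) : ℝ))⁻¹ * exp (-α S - 2 * β Sᶜ) := by
        refine (h.sum_uncovered_le hq hν hμ).trans ?_
        gcongr with S hS
        · exact sum_nonneg fun S _ => mul_nonneg (by positivity) (overlapMass_nonneg G hq S)
        · exact overlap_le S hS
    _ = _ := by
        simp_rw [exp_add, two_mul γ, exp_add, ← mul_assoc, ← sum_mul]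
        ring

end Codebook

theorem sum_filter_eq_sum_fibre {Ω X B : Type*} [Fintype Ω] [Fintype X] [Fintype B]
    (p : Ω × X × B → ℝ) {P : Ω × X × B → Prop} [DecidablePred P] {R : X → Prop} [DecidablePred R]
    {u : Ω} {b : B} (h : ∀ z, P z ↔ z.1 = u ∧ R z.2.1 ∧ z.2.2 = b) :
    ∑ z with P z, p z = ∑ x with R x, p (u, x, b) := by
  symm
  refine sum_nbij' (fun x => (u, x, b)) (fun z => z.2.1) ?_ ?_ ?_ ?_ ?_ <;>
    simp +contextual [h]

theorem cvMargS_mk {k : ℕ} {Ω B : Type*} {A : Fin k → Type*} [Fintype Ω] [Fintype B]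
    [∀ j, Fintype (A j)] [DecidableEq Ω] [DecidableEq B] [∀ j, DecidableEq (A j)]
    (p : Ω × (∀ j, A j) × B → ℝ) (S : Finset (Fin k)) (u : Ω) (x : ∀ j, A j) (b : B) :
    cvMargS p S (u, x, b) = marginalMass (fun y => p (u, y, b)) S x := by
  calc cvMargS p S (u, x, b) = ∑ y with ∀ j ∈ S, y j = x j, p (u, y, b) :=
        sum_filter_eq_sum_fibre p fun _ => Iff.rfl
    _ = marginalMass (fun y => p (u, y, b)) S x := by
        rw [marginalMass]
        congr!

open scoped Classical in
/-- **Conditional Chebyshev covering bound.**  If the pair `(u₀,u_{k+1})`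
satisfies `P(F(u₀,u_{k+1})) ≥ 1 − ε` (with `0 < ε < 1`), then under
Assumption I and the change-of-measure bounds for `γ`, `α_S`, `β_{Sᶜ}`,
`P(Z = 0 | u₀, u_{k+1}) ≤ (1/(1−ε))·|M|⁻¹·e^γ
  + (1/(1−ε))²·∑_{∅⊊S⊊[k]} |M_S|⁻¹·e^{−α_S − 2β_{Sᶜ} + 2γ}`. -/
theorem covering_stmt15
    {k : ℕ} {Ω₀ B : Type*} {A : Fin k → Type*}
    [Fintype Ω₀] [Fintype B] [∀ j, Fintype (A j)]
    [DecidableEq Ω₀] [DecidableEq B] [∀ j, DecidableEq (A j)]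
    (p : Ω₀ × (∀ j, A j) × B → ℝ)
    (hp0 : ∀ z, 0 ≤ p z) (hp1 : ∑ z, p z = 1)
    (qj : ∀ j : Fin k, Ω₀ → A j → ℝ) (hqj : ∀ j u₀ a, 0 ≤ qj j u₀ a)
    (M : Fin k → ℕ) (hM : ∀ j, 0 < M j)
    (u₀ : Ω₀) (b : B)
    (hpos : 0 < ∑ z ∈ Finset.univ.filter (fun z : Ω₀ × (∀ j, A j) × B =>
        z.1 = u₀ ∧ z.2.2 = b), p z)
    (ν : (∀ j, Fin (M j) → A j) → ℝ)
    (hν0 : ∀ c, 0 ≤ ν c) (hν1 : ∑ c, ν c = 1)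
    (hνm : ∀ (m : ∀ j, Fin (M j)) (x : ∀ j, A j),
      ∑ c ∈ Finset.univ.filter (fun c : ∀ j, Fin (M j) → A j =>
          ∀ j, c j (m j) = x j), ν c
        = ∏ j, qj j u₀ (x j))
    (hνpair : ∀ (m m' : ∀ j, Fin (M j)), m ≠ m' →
      ∀ (x x' : ∀ j, A j), (∀ j, m j = m' j → x j = x' j) →
      ∑ c ∈ Finset.univ.filter (fun c : ∀ j, Fin (M j) → A j =>
          (∀ j, c j (m j) = x j) ∧ ∀ j, c j (m' j) = x' j), ν c
        = (∏ j, qj j u₀ (x j)) *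
            ∏ j ∈ Finset.univ.filter (fun j => m j ≠ m' j), qj j u₀ (x' j))
    (F : Set (Ω₀ × (∀ j, A j) × B))
    (γ : ℝ)
    (hγ : ∀ z ∈ F,
      p z ≤ Real.exp γ * (cvMargS p ∅ z * ∏ j, qj j z.1 (z.2.1 j)))
    (α β : Finset (Fin k) → ℝ)
    (hα : ∀ S : Finset (Fin k), S.Nonempty → S ≠ Finset.univ →
      ∀ z ∈ cvProjS F S,
        Real.exp (α S) * (cvMargS p ∅ z * ∏ j ∈ S, qj j z.1 (z.2.1 j))
          ≤ cvMargS p S z)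
    (hβ : ∀ S : Finset (Fin k), S.Nonempty → S ≠ Finset.univ →
      ∀ z ∈ F,
        Real.exp (β Sᶜ) * (cvMargS p S z * ∏ j ∈ Sᶜ, qj j z.1 (z.2.1 j))
          ≤ p z)
    (ε : ℝ) (hε0 : 0 < ε) (hε1 : ε < 1)
    -- `P(F(u₀,u_{k+1})) ≥ 1 − ε`
    (hgood : 1 - ε ≤
      (∑ z ∈ Finset.univ.filter (fun z : Ω₀ × (∀ j, A j) × B =>
          z ∈ F ∧ z.1 = u₀ ∧ z.2.2 = b), p z) /
      (∑ z ∈ Finset.univ.filter (fun z : Ω₀ × (∀ j, A j) × B =>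
          z.1 = u₀ ∧ z.2.2 = b), p z)) :
    ∑ c ∈ Finset.univ.filter (fun c : ∀ j, Fin (M j) → A j =>
        ∀ m : ∀ j, Fin (M j), (u₀, fun j => c j (m j), b) ∉ F), ν c
    ≤ (1 / (1 - ε)) * (∏ j, (M j : ℝ))⁻¹ * Real.exp γ
      + (1 / (1 - ε)) ^ 2 *
        ∑ S ∈ Finset.univ.filter (fun S : Finset (Fin k) =>
            S.Nonempty ∧ S ≠ Finset.univ),
          (∏ j ∈ S, (M j : ℝ))⁻¹ *
            Real.exp (-α S - 2 * β Sᶜ + 2 * γ) := by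
  have (j : Fin k) : Nonempty (Fin (M j)) := ⟨⟨0, hM j⟩⟩
  have sum_fibre : ∑ z with z.1 = u₀ ∧ z.2.2 = b, p z = ∑ x, p (u₀, x, b) := by
    rw [sum_filter_eq_sum_fibre p (R := fun _ => True) (u := u₀) (b := b) (by simp), filter_true]
  have sum_fibre_F : ∑ z with z ∈ F ∧ z.1 = u₀ ∧ z.2.2 = b, p z =
      ∑ x with (u₀, x, b) ∈ F, p (u₀, x, b) :=
    sum_filter_eq_sum_fibre p (by grind)
  rw [sum_fibre] at hpos
  rw [sum_fibre, sum_fibre_F, le_div_iff₀ hpos] at hgood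
  have indep : IsPairwiseIndepCodebook (M := fun j => Fin (M j)) (fun j => qj j u₀) ν :=
    { sum_codeword_eq := fun m x => by simpa [codeword, funext_iff] using hνm m x
      sum_codeword_eq_and_eq := fun m m' hm x x' hx => by
        simpa [codeword, funext_iff] using hνpair m m' hm x x' hx }
  have bound := covering_stmt15_general (fun x => hp0 (u₀, x, b)) hpos (fun j => hqj j u₀)
    ⟨hν0, hν1⟩ indep (G := {x | (u₀, x, b) ∈ F}) (γ := γ) (α := α) (β := β)
    (fun x hx => by simpa [cvMargS_mk] using hγ (u₀, x, b) (by simpa using hx))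
    (fun S hne hproper x hx => by
      simpa [cvMargS_mk] using
        hα S hne hproper (u₀, x, b) ⟨x, fun _ _ => rfl, by simpa using hx⟩)
    (fun S hne hproper x hx => by
      simpa [cvMargS_mk] using hβ S hne hproper (u₀, x, b) (by simpa using hx))
    hε1 hgood
  simp only [mem_filter_univ, Fintype.card_fin] at bound
  exact bound
end

section
/- Multivariate covering lemma (direct part, weak typicality): Let p(u₀,…,u_{k+1}) be a joint pmf on finite alphabets and δ > 0. Let codebooks {U_jⁿ(m_j)}_{m_j ∈ [M_j]} with M_j ≥ e^{nR_j} be generated so that Assumptions I and II hold (each tuple indexed by m has i.i.d.-across-time law p(u₀)∏_j p(u_j|u₀), with the stated pairwise conditional independence across distinct m). If for every nonempty S ⊆ [k], ∑_{j∈S} R_j > ∑_{j∈S} H(U_j|U₀) − H(U_S|U₀,U_{k+1}) + (8k − 2|S| + 10)δ, then P(∃ m ∈ ∏_j[M_j] : (U₀ⁿ, U₁ⁿ(m₁),…,U_kⁿ(m_k), U_{k+1}ⁿ) ∈ A_δ^{(n)}) → 1 as n → ∞. -/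
open Finset Real

/-- Marginal of the joint pmf `p` on `U₀ × U_{[k]} × U_{k+1}` onto the subset
of coordinates consisting of: `u₀` (if `b0`), the `u_j` for `j ∈ S`, and
`u_{k+1}` (if `bB`); evaluated at a full tuple `z`. -/
def wMarg {k : ℕ} {Ω₀ B : Type*} {A : Fin k → Type*}
    [Fintype Ω₀] [Fintype B] [∀ j, Fintype (A j)]
    [DecidableEq Ω₀] [DecidableEq B] [∀ j, DecidableEq (A j)]
    (p : Ω₀ × (∀ j, A j) × B → ℝ) (b0 : Bool) (S : Finset (Fin k)) (bB : Bool)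
    (z : Ω₀ × (∀ j, A j) × B) : ℝ :=
  ∑ w ∈ Finset.univ.filter (fun w : Ω₀ × (∀ j, A j) × B =>
    (b0 = true → w.1 = z.1) ∧ (∀ j ∈ S, w.2.1 j = z.2.1 j) ∧
      (bB = true → w.2.2 = z.2.2)), p w

/-- Joint Shannon entropy (in nats) of the selected subset of coordinates. -/
noncomputable def wEnt {k : ℕ} {Ω₀ B : Type*} {A : Fin k → Type*}
    [Fintype Ω₀] [Fintype B] [∀ j, Fintype (A j)]
    [DecidableEq Ω₀] [DecidableEq B] [∀ j, DecidableEq (A j)]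
    (p : Ω₀ × (∀ j, A j) × B → ℝ) (b0 : Bool) (S : Finset (Fin k)) (bB : Bool) : ℝ :=
  -∑ z : Ω₀ × (∀ j, A j) × B, p z * Real.log (wMarg p b0 S bB z)

/-- The weakly `δ`-typical set `A_δ^{(n)}`. -/
noncomputable def wTypical {k : ℕ} {Ω₀ B : Type*} {A : Fin k → Type*}
    [Fintype Ω₀] [Fintype B] [∀ j, Fintype (A j)]
    [DecidableEq Ω₀] [DecidableEq B] [∀ j, DecidableEq (A j)]
    (p : Ω₀ × (∀ j, A j) × B → ℝ) (n : ℕ) (δ : ℝ) :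
    Set (Fin n → Ω₀ × (∀ j, A j) × B) :=
  {u | ∀ (b0 : Bool) (S : Finset (Fin k)) (bB : Bool),
    (b0 = true ∨ S.Nonempty ∨ bB = true) →
    |(-(1 / (n : ℝ)) * ∑ i, Real.log (wMarg p b0 S bB (u i))) -
      wEnt p b0 S bB| ≤ δ}

/-- Marginal pmf of `U₀`. -/
def pr0 {k : ℕ} {Ω₀ B : Type*} {A : Fin k → Type*}
    [Fintype Ω₀] [Fintype B] [∀ j, Fintype (A j)] [DecidableEq Ω₀]
    (p : Ω₀ × (∀ j, A j) × B → ℝ) (u₀ : Ω₀) : ℝ :=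
  ∑ z ∈ Finset.univ.filter (fun z : Ω₀ × (∀ j, A j) × B => z.1 = u₀), p z

/-- Joint marginal pmf of `(U₀, U_j)`. -/
def pr0j {k : ℕ} {Ω₀ B : Type*} {A : Fin k → Type*}
    [Fintype Ω₀] [Fintype B] [∀ j, Fintype (A j)] [DecidableEq Ω₀]
    [∀ j, DecidableEq (A j)]
    (p : Ω₀ × (∀ j, A j) × B → ℝ) (j : Fin k) (u₀ : Ω₀) (a : A j) : ℝ :=
  ∑ z ∈ Finset.univ.filter
    (fun z : Ω₀ × (∀ j, A j) × B => z.1 = u₀ ∧ z.2.1 j = a), p z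

/-- Joint marginal pmf of `(U₀, U_{k+1})`. -/
def pr0B {k : ℕ} {Ω₀ B : Type*} {A : Fin k → Type*}
    [Fintype Ω₀] [Fintype B] [∀ j, Fintype (A j)] [DecidableEq Ω₀]
    [DecidableEq B]
    (p : Ω₀ × (∀ j, A j) × B → ℝ) (u₀ : Ω₀) (b : B) : ℝ :=
  ∑ z ∈ Finset.univ.filter
    (fun z : Ω₀ × (∀ j, A j) × B => z.1 = u₀ ∧ z.2.2 = b), p z

/-!
The proof is a second moment argument for likelihood ratios. Let `G` be `pⁿ` restricted to the
target set and let `g_m = G(T_m) / q(T_m)`, where `T_m` is the codeword tuple of the message `m`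
and `q` its law. The average `A` of the `g_m` over all messages vanishes unless some `T_m` hits the
target, so `2A - A² ≤ 1` on the success event and the success probability is at least
`2 E[A] - E[A²]`.

The mean of `A` is the `pⁿ`-mass of the target, which tends to `1` by the weak law of large numbers.
If `m` and `m'` agree exactly on `S`, their tuples have joint law `q(z) q(z') / q_S(z)`, where `q_S`
is the marginal of `q` on the common coordinates. Hence `E[g_m g_m'] ≤ max (p_Sⁿ / q_S)` over the
target, and on typical sequences this ratio is at most `exp (n (coverRate S + 4|S|δ))`. Such an `m'`
occurs for a fraction of at most `∏_{j ∈ S} 1 / M_j` of the messages, so `E[A²]` is at most a sum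
over `S` in which `S = ∅` contributes `1` and every other term decays exponentially as soon as
`4|S|δ` is below the rate gap. As typical sets grow with `δ`, it is enough to hit the one for a
small `δ`.
-/

section SecondMoment

lemma sum_mul_comp_eq_sum_fiber {Ω Z : Type*} [Fintype Ω] [Fintype Z] [DecidableEq Z]
    (μ : Ω → ℝ) (T : Ω → Z) (f : Z → ℝ) :
    ∑ ω, μ ω * f (T ω) = ∑ z, (∑ ω with T ω = z, μ ω) * f z := by
  rw [← Finset.sum_fiberwise univ T]
  refine sum_congr rfl fun z _ => ?_
  rw [Finset.sum_mul]
  exact sum_congr rfl fun ω hω => by rw [(mem_filter.mp hω).2]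

open scoped Classical in
lemma two_mul_mean_sub_mean_mul_le_sum_filter {Ω I : Type*} [Fintype Ω] [Fintype I]
    (μ : Ω → ℝ) (hμ : ∀ ω, 0 ≤ μ ω) (g : I → Ω → ℝ) :
    2 * ((∑ m, ∑ ω, μ ω * g m ω) / Fintype.card I)
        - (∑ m, ∑ m', ∑ ω, μ ω * (g m ω * g m' ω)) / (Fintype.card I : ℝ) ^ 2
      ≤ ∑ ω with ∃ m, g m ω ≠ 0, μ ω := by
  set A : Ω → ℝ := fun ω => (∑ m, g m ω) / Fintype.card I
  have first : (∑ m, ∑ ω, μ ω * g m ω) / Fintype.card I = ∑ ω, μ ω * A ω := by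
    rw [Finset.sum_comm, Finset.sum_div]
    exact sum_congr rfl fun ω _ => by rw [← Finset.mul_sum, mul_div_assoc]
  have second : (∑ m, ∑ m', ∑ ω, μ ω * (g m ω * g m' ω)) / (Fintype.card I : ℝ) ^ 2
      = ∑ ω, μ ω * A ω ^ 2 := by
    simp_rw [A, div_pow, sq (∑ m, g m _), Finset.sum_mul_sum, ← mul_div_assoc, Finset.mul_sum,
      ← Finset.sum_div]
    congr 1
    rw [Finset.sum_comm]
    simp_rw [Finset.sum_comm (s := univ (α := Ω))]
    exact Finset.sum_comm
  have pointwise (ω : Ω) :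
      2 * (μ ω * A ω) - μ ω * A ω ^ 2 ≤ if ∃ m, g m ω ≠ 0 then μ ω else 0 := by
    split_ifs with hω
    · nlinarith [mul_nonneg (hμ ω) (sq_nonneg (A ω - 1))]
    · push Not at hω
      simp [A, hω]
  rw [first, second, Finset.mul_sum, ← Finset.sum_sub_distrib, Finset.sum_filter]
  exact Finset.sum_le_sum fun ω _ => pointwise ω

end SecondMoment

section Agreement

variable {ι : Type*} [Fintype ι] {I : ι → Type*} [∀ j, DecidableEq (I j)]

/-- The agreement set `{j : m_j = m'_j}` of two message tuples. -/
def agreeSet (m m' : ∀ j, I j) : Finset ι := {j | m j = m' j}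

lemma mem_agreeSet {m m' : ∀ j, I j} {j : ι} : j ∈ agreeSet m m' ↔ m j = m' j := by
  simp [agreeSet]

variable [DecidableEq ι] [∀ j, Fintype (I j)]

lemma card_filter_agreeSet_eq_le (m : ∀ j, I j) (S : Finset ι) :
    #{m' | agreeSet m m' = S} ≤ ∏ j ∈ Sᶜ, Fintype.card (I j) := by
  rw [← Finset.prod_coe_sort, ← Fintype.card_pi, ← Finset.card_univ]
  refine card_le_card_of_injOn (fun m' (j : ↥Sᶜ) => m' j) (fun _ _ => mem_coe.2 (mem_univ _)) ?_
  intro m₁ h₁ m₂ h₂ heq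
  simp only [coe_filter, mem_univ, true_and, Set.mem_ofPred_eq] at h₁ h₂
  ext1 j
  by_cases hj : j ∈ S
  · exact (mem_agreeSet.1 (h₁ ▸ hj)).symm.trans (mem_agreeSet.1 (h₂ ▸ hj))
  · exact congrFun heq ⟨j, mem_compl.2 hj⟩

lemma sum_agreeSet_div_card_le [∀ j, Nonempty (I j)] {K : Finset ι → ℝ} (hK : ∀ S, 0 ≤ K S)
    (m : ∀ j, I j) :
    (∑ m', K (agreeSet m m')) / Fintype.card (∀ j, I j)
      ≤ ∑ S, K S / ∏ j ∈ S, (Fintype.card (I j) : ℝ) := by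
  have card_pos (S : Finset ι) : 0 < ∏ j ∈ S, (Fintype.card (I j) : ℝ) :=
    Finset.prod_pos fun j _ => by exact_mod_cast Fintype.card_pos
  rw [← Finset.sum_fiberwise univ (agreeSet m), Finset.sum_div]
  refine Finset.sum_le_sum fun S _ => ?_
  have constant : ∑ m' with agreeSet m m' = S, K (agreeSet m m')
      = (#{m' | agreeSet m m' = S} : ℝ) * K S := by
    rw [← nsmul_eq_mul, ← Finset.sum_const]
    exact sum_congr rfl fun m' hm' => by rw [(mem_filter.mp hm').2]
  rw [constant, Fintype.card_pi, Nat.cast_prod, ← Finset.prod_mul_prod_compl S,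
    div_le_div_iff₀ (mul_pos (card_pos S) (card_pos Sᶜ)) (card_pos S)]
  have count : (#{m' | agreeSet m m' = S} : ℝ) ≤ ∏ j ∈ Sᶜ, (Fintype.card (I j) : ℝ) := by
    exact_mod_cast card_filter_agreeSet_eq_le m S
  calc (#{m' | agreeSet m m' = S} : ℝ) * K S * ∏ j ∈ S, (Fintype.card (I j) : ℝ)
      ≤ (∏ j ∈ Sᶜ, (Fintype.card (I j) : ℝ)) * K S * ∏ j ∈ S, (Fintype.card (I j) : ℝ) := by
        gcongr
        exact hK S
    _ = K S * ((∏ j ∈ S, (Fintype.card (I j) : ℝ)) * ∏ j ∈ Sᶜ, (Fintype.card (I j) : ℝ)) := by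
        ring

end Agreement

section OneShot

variable {Ω Z : Type*} [Fintype Ω] [Fintype Z] [DecidableEq Z]

lemma sum_mul_likelihoodRatio_eq {μ : Ω → ℝ} {T : Ω → Z} {q G : Z → ℝ}
    (hlaw : ∀ z, ∑ ω with T ω = z, μ ω = q z) (hq : ∀ z, G z ≠ 0 → 0 < q z) :
    ∑ ω, μ ω * (G (T ω) / q (T ω)) = ∑ z, G z := by
  rw [sum_mul_comp_eq_sum_fiber μ T (fun z => G z / q z)]
  exact sum_congr rfl fun z _ => by
    rw [hlaw, mul_div_cancel_of_imp' fun h0 => by_contra fun hG => (hq z hG).ne' h0]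

lemma sum_mul_likelihoodRatio_mul_le {μ : Ω → ℝ} {T T' : Ω → Z} {r : Z → Z → Prop}
    [DecidableRel r] {q ρ G : Z → ℝ} {K : ℝ} (hr : ∀ ω, r (T ω) (T' ω))
    (hpair : ∀ z z', r z z' → ∑ ω with T ω = z ∧ T' ω = z', μ ω = q z * q z' / ρ z)
    (hG : ∀ z, 0 ≤ G z) (hG1 : ∑ z, G z ≤ 1) (hq : ∀ z, G z ≠ 0 → 0 < q z)
    (hρ : ∀ z, G z ≠ 0 → 0 < ρ z) (hK : 0 ≤ K)
    (hKρ : ∀ z, G z ≠ 0 → ∑ z' with r z z', G z' ≤ K * ρ z) :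
    ∑ ω, μ ω * (G (T ω) / q (T ω) * (G (T' ω) / q (T' ω))) ≤ K := by
  have term (z z' : Z) :
      (∑ ω with (T ω, T' ω) = (z, z'), μ ω) * (G z / q z * (G z' / q z'))
        = G z * ((if r z z' then G z' else 0) / ρ z) := by
    simp only [Prod.mk.injEq]
    split_ifs with h
    · rcases eq_or_ne (G z) 0 with hz | hz
      · simp [hz]
      rcases eq_or_ne (G z') 0 with hz' | hz'
      · simp [hz']
      have := (hq z hz).ne'
      have := (hq z' hz').ne'
      rw [hpair z z' h]
      field_simp
    · rw [Finset.filter_false_of_mem]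
      · simp
      · rintro ω - ⟨rfl, rfl⟩
        exact h (hr ω)
  have row (z : Z) : ∑ z', G z * ((if r z z' then G z' else 0) / ρ z) ≤ G z * K := by
    rw [← Finset.mul_sum, ← Finset.sum_div, ← Finset.sum_filter]
    rcases eq_or_ne (G z) 0 with hz | hz
    · simp [hz]
    · exact mul_le_mul_of_nonneg_left ((div_le_iff₀ (hρ z hz)).2 (hKρ z hz)) (hG z)
  rw [sum_mul_comp_eq_sum_fiber μ (fun ω => (T ω, T' ω))
    (fun y => G y.1 / q y.1 * (G y.2 / q y.2)), Fintype.sum_prod_type]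
  simp only [term]
  calc ∑ z, ∑ z', G z * ((if r z z' then G z' else 0) / ρ z)
      ≤ ∑ z, G z * K := Finset.sum_le_sum fun z _ => row z
    _ = (∑ z, G z) * K := (Finset.sum_mul ..).symm
    _ ≤ K := mul_le_of_le_one_left hK hG1

variable {ι : Type*} [Fintype ι] [DecidableEq ι] {I : ι → Type*} [∀ j, DecidableEq (I j)]

/-- A random codebook: under the weight `μ`, every message tuple `m` selects a tuple `T m` of law
`q univ`, and two selected tuples are related by `r S`, where `S` is the agreement set of their
messages, and are conditionally independent given their common part, whose law is encoded by
`q S`. -/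
structure IsCodebook (μ : Ω → ℝ) (T : (∀ j, I j) → Ω → Z) (q : Finset ι → Z → ℝ)
    (r : Finset ι → Z → Z → Prop) : Prop where
  nonneg : ∀ ω, 0 ≤ μ ω
  rel : ∀ m m' ω, r (agreeSet m m') (T m ω) (T m' ω)
  law : ∀ m z, ∑ ω with T m ω = z, μ ω = q univ z
  pair : ∀ m m' z z', r (agreeSet m m') z z' →
    ∑ ω with T m ω = z ∧ T m' ω = z', μ ω = q univ z * q univ z' / q (agreeSet m m') z

variable [∀ j, Fintype (I j)] [∀ j, Nonempty (I j)]

open scoped Classical in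
theorem IsCodebook.two_mul_sum_sub_le {μ : Ω → ℝ} {T : (∀ j, I j) → Ω → Z}
    {q : Finset ι → Z → ℝ} {r : Finset ι → Z → Z → Prop} [∀ S, DecidableRel (r S)]
    (h : IsCodebook μ T q r)
    {G : Z → ℝ} {K : Finset ι → ℝ} (hG : ∀ z, 0 ≤ G z) (hG1 : ∑ z, G z ≤ 1)
    (hq : ∀ S z, G z ≠ 0 → 0 < q S z) (hK : ∀ S, 0 ≤ K S)
    (hKq : ∀ S z, G z ≠ 0 → ∑ z' with r S z z', G z' ≤ K S * q S z) :
    2 * ∑ z, G z - ∑ S, K S / ∏ j ∈ S, (Fintype.card (I j) : ℝ)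
      ≤ ∑ ω with ∃ m, G (T m ω) ≠ 0, μ ω := by
  set L : (∀ j, I j) → Ω → ℝ := fun m ω => G (T m ω) / q univ (T m ω)
  have card_pos : 0 < (Fintype.card (∀ j, I j) : ℝ) := by exact_mod_cast Fintype.card_pos
  have mean : (∑ m, ∑ ω, μ ω * L m ω) / Fintype.card (∀ j, I j) = ∑ z, G z := by
    simp only [L, sum_mul_likelihoodRatio_eq (h.law _) (hq univ)]
    rw [Finset.sum_const, card_univ, nsmul_eq_mul, mul_div_cancel_left₀ _ card_pos.ne']
  have mean_mul (m : ∀ j, I j) : (∑ m', ∑ ω, μ ω * (L m ω * L m' ω)) / Fintype.card (∀ j, I j)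
      ≤ ∑ S, K S / ∏ j ∈ S, (Fintype.card (I j) : ℝ) := by
    refine le_trans ?_ (sum_agreeSet_div_card_le hK m)
    gcongr with m'
    exact sum_mul_likelihoodRatio_mul_le (h.rel m m') (h.pair m m') hG hG1 (hq univ) (hq _) (hK _)
      (hKq _)
  have mean_mul_mean :
      (∑ m, ∑ m', ∑ ω, μ ω * (L m ω * L m' ω)) / (Fintype.card (∀ j, I j) : ℝ) ^ 2
        ≤ ∑ S, K S / ∏ j ∈ S, (Fintype.card (I j) : ℝ) := by
    rw [sq, ← div_div, Finset.sum_div, div_le_iff₀ card_pos]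
    refine (Finset.sum_le_sum fun m _ => mean_mul m).trans_eq ?_
    rw [Finset.sum_const, card_univ, nsmul_eq_mul, mul_comm]
  have ratio_ne_zero : ∑ ω with ∃ m, L m ω ≠ 0, μ ω ≤ ∑ ω with ∃ m, G (T m ω) ≠ 0, μ ω :=
    Finset.sum_le_sum_of_subset_of_nonneg
      (monotone_filter_right _ fun ω _ hω => hω.imp fun m hm => (div_ne_zero_iff.1 hm).1)
      fun ω _ _ => h.nonneg ω
  linarith [two_mul_mean_sub_mean_mul_le_sum_filter μ h.nonneg L]

end OneShot

section WeakLaw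

lemma sum_sub_sum_sum_filter_le_sum_filter {Z ι : Type*} [Fintype Z] [Fintype ι] {w : Z → ℝ}
    (hw : ∀ z, 0 ≤ w z) {P : Z → Prop} [DecidablePred P] {D : ι → Z → Prop}
    [∀ s, DecidablePred (D s)] (h : ∀ z, w z ≠ 0 → ¬P z → ∃ s, D s z) :
    ∑ z, w z - ∑ s, ∑ z with D s z, w z ≤ ∑ z with P z, w z := by
  simp only [sub_le_iff_le_add, Finset.sum_filter]
  rw [Finset.sum_comm, ← Finset.sum_add_distrib]
  refine Finset.sum_le_sum fun z _ => ?_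
  have term_nonneg (s : ι) : 0 ≤ if D s z then w z else 0 := ite_nonneg (hw z) le_rfl
  have sum_nonneg : 0 ≤ ∑ s, if D s z then w z else 0 :=
    Finset.sum_nonneg fun s _ => term_nonneg s
  split_ifs with hz
  · exact le_add_of_nonneg_right sum_nonneg
  rcases eq_or_ne (w z) 0 with h0 | h0
  · simp [h0]
  obtain ⟨s, hs⟩ := h z h0 hz
  rw [zero_add]
  exact (if_pos hs).ge.trans (Finset.single_le_sum (fun s _ => term_nonneg s) (mem_univ s))

variable {ι Z : Type*} [Fintype ι] [Fintype Z]

lemma sum_prod_eq_one [DecidableEq ι] {p : Z → ℝ} (hp1 : ∑ z, p z = 1) :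
    ∑ z : ι → Z, ∏ i, p (z i) = 1 := by
  rw [← Fintype.prod_sum fun _ => p]
  simp [hp1]

lemma sum_prod_filter_forall_rel [DecidableEq ι] (p : Z → ℝ) (r : Z → Z → Prop)
    [∀ a b, Decidable (r a b)] (z : ι → Z) :
    ∑ z' : ι → Z with ∀ i, r (z i) (z' i), ∏ i, p (z' i) = ∏ i, ∑ w with r (z i) w, p w := by
  rw [Finset.prod_univ_sum]
  exact sum_congr (by ext; simp) fun _ _ => rfl

lemma sum_prod_mul_mul_eq [DecidableEq ι] {p g : Z → ℝ} (hp1 : ∑ z, p z = 1)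
    (hg : ∑ z, p z * g z = 0) (i l : ι) :
    ∑ z : ι → Z, (∏ t, p (z t)) * (g (z i) * g (z l))
      = if i = l then ∑ z, p z * g z ^ 2 else 0 := by
  have factor (z : ι → Z) : (∏ t, p (z t)) * (g (z i) * g (z l))
      = ∏ t, p (z t) * ((if i = t then g (z t) else 1) * if l = t then g (z t) else 1) := by
    simp only [Finset.prod_mul_distrib, Fintype.prod_ite_eq]
  simp only [factor]
  rw [← Fintype.prod_sum
    fun t a => p a * ((if i = t then g a else 1) * if l = t then g a else 1)]
  split_ifs with h
  · subst h
    rw [Finset.prod_eq_single i _ (by simp)]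
    · simp [sq]
    · intro t _ ht
      simp [ht.symm, hp1]
  · exact Finset.prod_eq_zero (mem_univ i) (by simpa [Ne.symm h] using hg)

lemma sum_prod_mul_sum_sq [DecidableEq ι] {p g : Z → ℝ} (hp1 : ∑ z, p z = 1)
    (hg : ∑ z, p z * g z = 0) :
    ∑ z : ι → Z, (∏ i, p (z i)) * (∑ i, g (z i)) ^ 2
      = Fintype.card ι * ∑ z, p z * g z ^ 2 := by
  simp_rw [sq (Finset.sum _ _), Finset.sum_mul_sum, Finset.mul_sum]
  rw [Finset.sum_comm]
  simp_rw [Finset.sum_comm (s := univ (α := ι → Z)), sum_prod_mul_mul_eq hp1 hg]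
  simp [Finset.mul_sum]

open scoped Classical in
lemma sum_prod_filter_deviation_le {p : Z → ℝ} (hp : ∀ z, 0 ≤ p z) (hp1 : ∑ z, p z = 1)
    (f : Z → ℝ) {δ : ℝ} (hδ : 0 < δ) {n : ℕ} (hn : 0 < n) :
    ∑ z : Fin n → Z with δ < |(∑ i, f (z i)) / n - ∑ a, p a * f a|, ∏ i, p (z i)
      ≤ (∑ z, p z * (f z - ∑ a, p a * f a) ^ 2) / δ ^ 2 / n := by
  set e := ∑ a, p a * f a with he
  have centered : ∑ z, p z * (f z - e) = 0 := by
    simp [mul_sub, Finset.sum_sub_distrib, ← Finset.sum_mul, hp1, he]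
  have hn' : (0 : ℝ) < n := by exact_mod_cast hn
  have chebyshev (z : Fin n → Z) (hz : δ < |(∑ i, f (z i)) / n - e|) :
      ∏ i, p (z i) ≤ (∏ i, p (z i)) * (∑ i, (f (z i) - e)) ^ 2 / (n * δ) ^ 2 := by
    have average : (∑ i, f (z i)) / n - e = (∑ i, (f (z i) - e)) / n := by
      rw [Finset.sum_sub_distrib, Finset.sum_const, card_univ, Fintype.card_fin, nsmul_eq_mul]
      field_simp
    rw [average, abs_div, abs_of_pos hn', lt_div_iff₀' hn'] at hz
    rw [mul_div_assoc]
    refine le_mul_of_one_le_right (Finset.prod_nonneg fun _ _ => hp _) ?_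
    rw [one_le_div (by positivity), sq_le_sq, abs_of_pos (by positivity)]
    exact hz.le
  have nonneg (z : Fin n → Z) :
      0 ≤ (∏ i, p (z i)) * (∑ i, (f (z i) - e)) ^ 2 / (n * δ) ^ 2 :=
    div_nonneg (mul_nonneg (Finset.prod_nonneg fun _ _ => hp _) (sq_nonneg _)) (sq_nonneg _)
  calc ∑ z : Fin n → Z with δ < |(∑ i, f (z i)) / n - e|, ∏ i, p (z i)
      ≤ ∑ z : Fin n → Z with δ < |(∑ i, f (z i)) / n - e|,
          (∏ i, p (z i)) * (∑ i, (f (z i) - e)) ^ 2 / (n * δ) ^ 2 :=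
        Finset.sum_le_sum fun z hz => chebyshev z (mem_filter.1 hz).2
    _ ≤ ∑ z : Fin n → Z, (∏ i, p (z i)) * (∑ i, (f (z i) - e)) ^ 2 / (n * δ) ^ 2 :=
        Finset.sum_le_sum_of_subset_of_nonneg (filter_subset _ _) fun z _ _ => nonneg z
    _ = (∑ z, p z * (f z - e) ^ 2) / δ ^ 2 / n := by
        rw [← Finset.sum_div, sum_prod_mul_sum_sq hp1 centered, Fintype.card_fin]
        field_simp

open scoped Classical in
lemma tendsto_sum_prod_filter_deviation {p : Z → ℝ} (hp : ∀ z, 0 ≤ p z) (hp1 : ∑ z, p z = 1)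
    (f : Z → ℝ) {δ : ℝ} (hδ : 0 < δ) :
    Filter.Tendsto (fun n : ℕ => ∑ z : Fin n → Z
        with δ < |(∑ i, f (z i)) / n - ∑ a, p a * f a|, ∏ i, p (z i))
      Filter.atTop (nhds 0) := by
  refine tendsto_of_tendsto_of_tendsto_of_le_of_le' tendsto_const_nhds
    (tendsto_const_div_atTop_nhds_zero_nat
      ((∑ z, p z * (f z - ∑ a, p a * f a) ^ 2) / δ ^ 2)) ?_ ?_
  · exact .of_forall fun n =>
      Finset.sum_nonneg fun z _ => Finset.prod_nonneg fun _ _ => hp _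
  · filter_upwards [Filter.eventually_gt_atTop 0] with n hn
    exact sum_prod_filter_deviation_le hp hp1 f hδ hn

end WeakLaw

section SingleLetter

variable {k : ℕ} {Ω₀ B : Type*} {A : Fin k → Type*}

/-- `w` agrees with `z` in `u₀`, in `u_{k+1}` and in every `u_j` with `j ∈ S`. -/
def AgreeOn (S : Finset (Fin k)) (z w : Ω₀ × (∀ j, A j) × B) : Prop :=
  w.1 = z.1 ∧ (∀ j ∈ S, w.2.1 j = z.2.1 j) ∧ w.2.2 = z.2.2

lemma AgreeOn.eq_of_univ {z w : Ω₀ × (∀ j, A j) × B} (h : AgreeOn univ z w) : z = w :=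
  Prod.ext h.1.symm (Prod.ext (funext fun j => (h.2.1 j (mem_univ j)).symm) h.2.2.symm)

variable [Fintype Ω₀] [Fintype B] [∀ j, Fintype (A j)] [DecidableEq Ω₀] [DecidableEq B]
  {p : Ω₀ × (∀ j, A j) × B → ℝ}

lemma pr0_mul_pr0B_div_pr0 (hp : ∀ z, 0 ≤ p z) (u : Ω₀) (b : B) :
    pr0 p u * (pr0B p u b / pr0 p u) = pr0B p u b := by
  refine mul_div_cancel_of_imp' fun h0 => le_antisymm ?_ (Finset.sum_nonneg fun z _ => hp z)
  rw [← h0]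
  exact Finset.sum_le_sum_of_subset_of_nonneg (monotone_filter_right _ fun _ _ h => h.1)
    fun z _ _ => hp z

variable [∀ j, DecidableEq (A j)]

open scoped Classical in
lemma wMarg_eq_sum_agreeOn (S : Finset (Fin k)) (z : Ω₀ × (∀ j, A j) × B) :
    wMarg p true S true z = ∑ w with AgreeOn S z w, p w := by
  unfold wMarg AgreeOn
  simp only [forall_const]
  congr!

lemma wMarg_true_empty_false (z : Ω₀ × (∀ j, A j) × B) :
    wMarg p true ∅ false z = pr0 p z.1 := by
  simp [wMarg, pr0]

lemma wMarg_true_singleton_false (j : Fin k) (z : Ω₀ × (∀ j, A j) × B) :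
    wMarg p true {j} false z = pr0j p j z.1 (z.2.1 j) := by
  simp [wMarg, pr0j]

lemma wMarg_true_empty_true (z : Ω₀ × (∀ j, A j) × B) :
    wMarg p true ∅ true z = pr0B p z.1 z.2.2 := by
  simp [wMarg, pr0B]

lemma wMarg_pos (hp : ∀ z, 0 ≤ p z) {z : Ω₀ × (∀ j, A j) × B} (hz : 0 < p z) (b0 : Bool)
    (S : Finset (Fin k)) (bB : Bool) : 0 < wMarg p b0 S bB z :=
  Finset.sum_pos' (fun w _ => hp w) ⟨z, by simp, hz⟩

/-- Marginal on the coordinates `0`, `S` and `k + 1` of the law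
`p(u₀) p(u_{k+1}|u₀) ∏_j p(u_j|u₀)` of a single letter of a codeword tuple. -/
noncomputable def codeMarg (p : Ω₀ × (∀ j, A j) × B → ℝ) (S : Finset (Fin k))
    (z : Ω₀ × (∀ j, A j) × B) : ℝ :=
  pr0B p z.1 z.2.2 * ∏ j ∈ S, pr0j p j z.1 (z.2.1 j) / pr0 p z.1

lemma codeMarg_univ_eq_mul (S : Finset (Fin k)) (z : Ω₀ × (∀ j, A j) × B) :
    codeMarg p univ z = codeMarg p S z * ∏ j ∈ Sᶜ, pr0j p j z.1 (z.2.1 j) / pr0 p z.1 := by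
  rw [codeMarg, codeMarg, mul_assoc, Finset.prod_mul_prod_compl]

lemma AgreeOn.codeMarg_eq {S : Finset (Fin k)} {z w : Ω₀ × (∀ j, A j) × B}
    (h : AgreeOn S z w) : codeMarg p S w = codeMarg p S z := by
  rw [codeMarg, codeMarg, h.1, h.2.2]
  exact congrArg _ (prod_congr rfl fun j hj => by rw [h.2.1 j hj])

lemma AgreeOn.codeMarg_mul_div_eq {S : Finset (Fin k)} {z w : Ω₀ × (∀ j, A j) × B}
    (h : AgreeOn S z w) :
    codeMarg p univ z * codeMarg p univ w / codeMarg p S z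
      = codeMarg p univ z * ∏ j ∈ Sᶜ, pr0j p j w.1 (w.2.1 j) / pr0 p w.1 := by
  rw [codeMarg_univ_eq_mul S w, h.codeMarg_eq, codeMarg_univ_eq_mul S z]
  rcases eq_or_ne (codeMarg p S z) 0 with h0 | h0
  · simp [h0]
  · field_simp

lemma codeMarg_pos (hp : ∀ z, 0 ≤ p z) {z : Ω₀ × (∀ j, A j) × B} (hz : 0 < p z)
    (S : Finset (Fin k)) : 0 < codeMarg p S z := by
  simp only [codeMarg, ← wMarg_true_empty_true, ← wMarg_true_singleton_false,
    ← wMarg_true_empty_false]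
  exact mul_pos (wMarg_pos hp hz ..)
    (Finset.prod_pos fun j _ => div_pos (wMarg_pos hp hz ..) (wMarg_pos hp hz ..))

lemma log_codeMarg (hp : ∀ z, 0 ≤ p z) {z : Ω₀ × (∀ j, A j) × B} (hz : 0 < p z)
    (S : Finset (Fin k)) :
    log (codeMarg p S z) = log (wMarg p true ∅ true z)
      + ∑ j ∈ S, (log (wMarg p true {j} false z) - log (wMarg p true ∅ false z)) := by
  have ne_zero (b0 : Bool) (S : Finset (Fin k)) (bB : Bool) : wMarg p b0 S bB z ≠ 0 :=
    (wMarg_pos hp hz b0 S bB).ne'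
  simp only [codeMarg, ← wMarg_true_empty_true, ← wMarg_true_singleton_false,
    ← wMarg_true_empty_false]
  have ratio_ne_zero (j : Fin k) : wMarg p true {j} false z / wMarg p true ∅ false z ≠ 0 :=
    div_ne_zero (ne_zero _ _ _) (ne_zero _ _ _)
  rw [log_mul (ne_zero _ _ _) (Finset.prod_ne_zero_iff.2 fun j _ => ratio_ne_zero j),
    log_prod fun j _ => ratio_ne_zero j]
  exact congrArg _ (sum_congr rfl fun j _ => log_div (ne_zero _ _ _) (ne_zero _ _ _))

end SingleLetter

section CodewordTuple

variable {k n : ℕ} {Ω₀ B : Type*} {A I : Fin k → Type*}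

/-- The sequence `(U₀ⁿ, U₁ⁿ(m₁), …, U_kⁿ(m_k), U_{k+1}ⁿ)` of the outcome `ω`, read letter by
letter. -/
def codewordTuple (m : ∀ j, I j) (ω : (Fin n → Ω₀) × (∀ j, I j → Fin n → A j) × (Fin n → B)) :
    Fin n → Ω₀ × (∀ j, A j) × B :=
  fun i => (ω.1 i, fun j => ω.2.1 j (m j) i, ω.2.2 i)

lemma codewordTuple_eq_iff {m : ∀ j, I j}
    {ω : (Fin n → Ω₀) × (∀ j, I j → Fin n → A j) × (Fin n → B)}
    {z : Fin n → Ω₀ × (∀ j, A j) × B} :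
    codewordTuple m ω = z ↔ (ω.1 = fun i => (z i).1) ∧
      (∀ j, ω.2.1 j (m j) = fun i => (z i).2.1 j) ∧ ω.2.2 = fun i => (z i).2.2 := by
  simp only [codewordTuple, funext_iff, Prod.ext_iff, forall_and]
  rw [forall_comm (α := Fin n)]

lemma codewordTuple_eq_and_iff {m m' : ∀ j, I j}
    {ω : (Fin n → Ω₀) × (∀ j, I j → Fin n → A j) × (Fin n → B)} {S : Finset (Fin k)}
    {z z' : Fin n → Ω₀ × (∀ j, A j) × B} (h : ∀ i, AgreeOn S (z i) (z' i)) :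
    codewordTuple m ω = z ∧ codewordTuple m' ω = z' ↔ (ω.1 = fun i => (z i).1) ∧
      (∀ j, ω.2.1 j (m j) = fun i => (z i).2.1 j) ∧
      (∀ j, ω.2.1 j (m' j) = fun i => (z' i).2.1 j) ∧ ω.2.2 = fun i => (z i).2.2 := by
  have fst : (fun i => (z' i).1) = fun i => (z i).1 := funext fun i => (h i).1
  have last : (fun i => (z' i).2.2) = fun i => (z i).2.2 := funext fun i => (h i).2.2
  rw [codewordTuple_eq_iff, codewordTuple_eq_iff, fst, last]
  tauto

variable [Fintype Ω₀] [Fintype B] [∀ j, Fintype (A j)] [∀ j, Fintype (I j)]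
  [DecidableEq Ω₀] [DecidableEq B] [∀ j, DecidableEq (A j)] [∀ j, DecidableEq (I j)]

open scoped Classical in
lemma isCodebook_codewordTuple {p : Ω₀ × (∀ j, A j) × B → ℝ} (hp : ∀ z, 0 ≤ p z)
    {μ : (Fin n → Ω₀) × (∀ j, I j → Fin n → A j) × (Fin n → B) → ℝ} (hμ0 : ∀ ω, 0 ≤ μ ω)
    (hlaw : ∀ (m : ∀ j, I j) (u : Fin n → Ω₀) (x : ∀ j, Fin n → A j) (v : Fin n → B),
      ∑ ω with ω.1 = u ∧ (∀ j, ω.2.1 j (m j) = x j) ∧ ω.2.2 = v, μ ω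
        = ∏ i, (pr0 p (u i) * (∏ j, pr0j p j (u i) (x j i) / pr0 p (u i)) *
            (pr0B p (u i) (v i) / pr0 p (u i))))
    (hpair : ∀ m m' : ∀ j, I j, m ≠ m' →
      ∀ (u : Fin n → Ω₀) (x x' : ∀ j, Fin n → A j) (v : Fin n → B),
        (∀ j, m j = m' j → x j = x' j) →
      ∑ ω with ω.1 = u ∧ (∀ j, ω.2.1 j (m j) = x j) ∧ (∀ j, ω.2.1 j (m' j) = x' j) ∧ ω.2.2 = v,
          μ ω
        = ∏ i, (pr0 p (u i) * (pr0B p (u i) (v i) / pr0 p (u i)) *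
            (∏ j, pr0j p j (u i) (x j i) / pr0 p (u i)) *
            ∏ j with m j ≠ m' j, pr0j p j (u i) (x' j i) / pr0 p (u i))) :
    IsCodebook μ codewordTuple (fun S z => ∏ i, codeMarg p S (z i))
      fun S z z' => ∀ i, AgreeOn S (z i) (z' i) := by
  have law (m : ∀ j, I j) (z : Fin n → Ω₀ × (∀ j, A j) × B) :
      ∑ ω with codewordTuple m ω = z, μ ω = ∏ i, codeMarg p univ (z i) := by
    simp only [codewordTuple_eq_iff]
    rw [hlaw m _ (fun j i => (z i).2.1 j)]
    exact prod_congr rfl fun i _ => by rw [mul_right_comm, pr0_mul_pr0B_div_pr0 hp, codeMarg]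
  refine ⟨hμ0, fun m m' ω i => ⟨rfl, fun j hj => ?_, rfl⟩, law, fun m m' z z' h => ?_⟩
  · simp only [codewordTuple, mem_agreeSet.1 hj]
  obtain rfl | hne := eq_or_ne m m'
  · have univ_eq : agreeSet m m = univ := by ext; simp [mem_agreeSet]
    simp only [univ_eq] at h ⊢
    obtain rfl : z = z' := funext fun i => (h i).eq_of_univ
    simp only [and_self, law, mul_self_div_self]
  · have differ : ({j | m j ≠ m' j} : Finset (Fin k)) = (agreeSet m m')ᶜ := by
      ext; simp [mem_agreeSet]
    simp only [codewordTuple_eq_and_iff h]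
    rw [hpair m m' hne _ (fun j i => (z i).2.1 j) (fun j i => (z' i).2.1 j) _ fun j hj =>
      funext fun i => ((h i).2.1 j (mem_agreeSet.2 hj)).symm, differ,
      ← Finset.prod_mul_distrib, ← Finset.prod_div_distrib]
    refine prod_congr rfl fun i _ => ?_
    rw [(h i).codeMarg_mul_div_eq, pr0_mul_pr0B_div_pr0 hp, (h i).1, codeMarg]

end CodewordTuple

section Typicality

variable {k : ℕ} {Ω₀ B : Type*} {A : Fin k → Type*}
  [Fintype Ω₀] [Fintype B] [∀ j, Fintype (A j)]
  [DecidableEq Ω₀] [DecidableEq B] [∀ j, DecidableEq (A j)]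
  {p : Ω₀ × (∀ j, A j) × B → ℝ} {n : ℕ} {δ : ℝ}

/-- The covering rate `∑_{j ∈ S} H(U_j|U₀) - H(U_S|U₀,U_{k+1})` in nats. -/
noncomputable def coverRate (p : Ω₀ × (∀ j, A j) × B → ℝ) (S : Finset (Fin k)) : ℝ :=
  (∑ j ∈ S, (wEnt p true {j} false - wEnt p true ∅ false))
    - (wEnt p true S true - wEnt p true ∅ true)

lemma coverRate_empty : coverRate p ∅ = 0 := by
  simp [coverRate]

/-- The typical sequences all of whose letters lie in the support of `p`. Off the support a
marginal may vanish, and `log 0 = 0` would let such letters pass the test of `wTypical`. -/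
def supportedTypical (p : Ω₀ × (∀ j, A j) × B → ℝ) (n : ℕ) (δ : ℝ) :
    Set (Fin n → Ω₀ × (∀ j, A j) × B) :=
  {z ∈ wTypical p n δ | ∀ i, 0 < p (z i)}

lemma supportedTypical_eq_wTypical (hp : ∀ z, 0 < p z) :
    supportedTypical p n δ = wTypical p n δ :=
  Set.sep_eq_self_iff_mem_true.2 fun _ _ _ => hp _

lemma supportedTypical_mono {δ' : ℝ} (h : δ ≤ δ') :
    supportedTypical p n δ ⊆ supportedTypical p n δ' :=
  fun _ hz => ⟨fun b0 S bB hne => (hz.1 b0 S bB hne).trans h, hz.2⟩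

lemma abs_sum_log_wMarg_add_le {z : Fin n → Ω₀ × (∀ j, A j) × B} (hz : z ∈ wTypical p n δ)
    {b0 : Bool} {S : Finset (Fin k)} {bB : Bool} (hne : b0 = true ∨ S.Nonempty ∨ bB = true) :
    |∑ i, log (wMarg p b0 S bB (z i)) + n * wEnt p b0 S bB| ≤ n * δ := by
  obtain rfl | hn := n.eq_zero_or_pos
  · simp
  have hn' : (0 : ℝ) < n := by exact_mod_cast hn
  have scale : ∑ i, log (wMarg p b0 S bB (z i)) + n * wEnt p b0 S bB
      = -(n * (-(1 / (n : ℝ)) * ∑ i, log (wMarg p b0 S bB (z i)) - wEnt p b0 S bB)) := by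
    field_simp
    ring
  rw [scale, abs_neg, abs_mul, abs_of_pos hn']
  exact mul_le_mul_of_nonneg_left (hz b0 S bB hne) hn'.le

lemma sum_log_wMarg_le {z : Fin n → Ω₀ × (∀ j, A j) × B} (hp : ∀ z, 0 ≤ p z)
    (hz : z ∈ supportedTypical p n δ) (S : Finset (Fin k)) :
    ∑ i, log (wMarg p true S true (z i))
      ≤ n * (coverRate p S + 4 * #S * δ) + ∑ i, log (codeMarg p S (z i)) := by
  have near (S : Finset (Fin k)) (bB : Bool) :=
    abs_le.1 (abs_sum_log_wMarg_add_le hz.1 (b0 := true) (S := S) (bB := bB) (.inl rfl))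
  simp only [log_codeMarg hp (hz.2 _), Finset.sum_add_distrib]
  obtain rfl | hS := S.eq_empty_or_nonempty
  · simp [coverRate_empty]
  have ratio (j : Fin k) :
      -(n * (wEnt p true {j} false - wEnt p true ∅ false + 2 * δ))
        ≤ ∑ i, (log (wMarg p true {j} false (z i)) - log (wMarg p true ∅ false (z i))) := by
    rw [Finset.sum_sub_distrib]
    linarith [near {j} false, near ∅ false]
  have ratios := Finset.sum_le_sum fun j (_ : j ∈ S) => ratio j
  rw [Finset.sum_neg_distrib, ← Finset.mul_sum, Finset.sum_add_distrib, Finset.sum_const,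
    nsmul_eq_mul, Finset.sum_comm] at ratios
  have slack : n * δ ≤ #S * (n * δ) := by
    have card_pos : (1 : ℝ) ≤ #S := by exact_mod_cast hS.card_pos
    exact le_mul_of_one_le_left ((abs_nonneg _).trans
      (abs_sum_log_wMarg_add_le hz.1 (b0 := true) (S := S) (bB := true) (.inl rfl))) card_pos
  unfold coverRate
  linarith [near S true, near ∅ true]

lemma prod_wMarg_le (hp : ∀ z, 0 ≤ p z) {z : Fin n → Ω₀ × (∀ j, A j) × B}
    (hz : z ∈ supportedTypical p n δ) (S : Finset (Fin k)) :
    ∏ i, wMarg p true S true (z i)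
      ≤ exp (n * (coverRate p S + 4 * #S * δ)) * ∏ i, codeMarg p S (z i) := by
  have wMarg_pos (i : Fin n) := wMarg_pos hp (hz.2 i) true S true
  have codeMarg_pos (i : Fin n) := codeMarg_pos hp (hz.2 i) S
  have prod_pos := Finset.prod_pos fun i (_ : i ∈ univ) => codeMarg_pos i
  rw [← log_le_log_iff (Finset.prod_pos fun i _ => wMarg_pos i) (mul_pos (exp_pos _) prod_pos),
    log_mul (exp_pos _).ne' prod_pos.ne', log_exp, log_prod fun i _ => (wMarg_pos i).ne',
    log_prod fun i _ => (codeMarg_pos i).ne']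
  exact sum_log_wMarg_le hp hz S

open scoped Classical in
lemma one_sub_sum_deviation_le_sum_supportedTypical (hp : ∀ z, 0 ≤ p z) (hp1 : ∑ z, p z = 1)
    (n : ℕ) (δ : ℝ) :
    1 - ∑ s : Bool × Finset (Fin k) × Bool, ∑ z : Fin n → Ω₀ × (∀ j, A j) × B
        with δ < |(∑ i, -log (wMarg p s.1 s.2.1 s.2.2 (z i))) / n
          - ∑ a, p a * -log (wMarg p s.1 s.2.1 s.2.2 a)|, ∏ i, p (z i)
      ≤ ∑ z with z ∈ supportedTypical p n δ, ∏ i, p (z i) := by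
  rw [← sum_prod_eq_one (ι := Fin n) hp1]
  refine sum_sub_sum_sum_filter_le_sum_filter (fun _ => Finset.prod_nonneg fun _ _ => hp _)
    fun z hz hz' => ?_
  have support (i : Fin n) : 0 < p (z i) :=
    (hp _).lt_of_ne' (Finset.prod_ne_zero_iff.1 hz i (mem_univ i))
  have atypical : z ∉ wTypical p n δ := fun h => hz' ⟨h, support⟩
  simp only [wTypical, Set.mem_ofPred_eq, not_forall, not_le] at atypical
  obtain ⟨b0, S, bB, -, deviation⟩ := atypical
  have test_eq : (∑ i, -log (wMarg p b0 S bB (z i))) / n - ∑ a, p a * -log (wMarg p b0 S bB a)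
      = -(1 / (n : ℝ)) * ∑ i, log (wMarg p b0 S bB (z i)) - wEnt p b0 S bB := by
    simp only [wEnt, Finset.sum_neg_distrib, mul_neg]
    ring
  rw [← test_eq] at deviation
  exact ⟨(b0, S, bB), deviation⟩

open scoped Classical in
lemma tendsto_sum_supportedTypical (hp : ∀ z, 0 ≤ p z) (hp1 : ∑ z, p z = 1) (hδ : 0 < δ) :
    Filter.Tendsto (fun n : ℕ => ∑ z with z ∈ supportedTypical p n δ, ∏ i, p (z i))
      Filter.atTop (nhds 1) := by
  have deviations := tendsto_finsetSum univ fun (s : Bool × Finset (Fin k) × Bool) _ =>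
    tendsto_sum_prod_filter_deviation hp hp1 (fun a => -log (wMarg p s.1 s.2.1 s.2.2 a)) hδ
  have lower := (tendsto_const_nhds (x := (1 : ℝ))).sub deviations
  rw [Finset.sum_const_zero, sub_zero] at lower
  refine tendsto_of_tendsto_of_tendsto_of_le_of_le lower tendsto_const_nhds
    (fun n => one_sub_sum_deviation_le_sum_supportedTypical hp hp1 n δ) fun n => ?_
  rw [← sum_prod_eq_one (ι := Fin n) hp1]
  exact Finset.sum_le_sum_of_subset_of_nonneg (filter_subset _ _)
    fun _ _ _ => Finset.prod_nonneg fun _ _ => hp _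

end Typicality

section Rates

lemma exp_mul_div_prod_le {ι : Type*} {R M : ι → ℝ} {n : ℕ} (hM : ∀ j, exp (n * R j) ≤ M j)
    (S : Finset ι) (c : ℝ) :
    exp (n * c) / ∏ j ∈ S, M j ≤ exp (c - ∑ j ∈ S, R j) ^ n := by
  have prod_le : exp (n * ∑ j ∈ S, R j) ≤ ∏ j ∈ S, M j := by
    rw [Finset.mul_sum, exp_sum]
    exact Finset.prod_le_prod (fun _ _ => (exp_pos _).le) fun j _ => hM j
  rw [← exp_nat_mul, mul_sub, exp_sub]
  gcongr

lemma tendsto_sum_exp_mul_div_prod {ι : Type*} [Fintype ι] {R : ι → ℝ}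
    {M : ℕ → ι → ℝ} (hM : ∀ (n : ℕ) j, exp (n * R j) ≤ M n j) {c : Finset ι → ℝ} (hc0 : c ∅ = 0)
    (hc : ∀ S : Finset ι, S.Nonempty → c S < ∑ j ∈ S, R j) :
    Filter.Tendsto (fun n : ℕ => ∑ S : Finset ι, exp (n * c S) / ∏ j ∈ S, M n j)
      Filter.atTop (nhds 1) := by
  classical
  have limit (S : Finset ι) : Filter.Tendsto (fun n : ℕ => exp (n * c S) / ∏ j ∈ S, M n j)
      Filter.atTop (nhds (if S = ∅ then 1 else 0)) := by
    split_ifs with hS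
    · simp [hS, hc0]
    · have gap := sub_neg.2 (hc S (Finset.nonempty_iff_ne_empty.2 hS))
      exact squeeze_zero
        (fun n => div_nonneg (exp_pos _).le
          (Finset.prod_nonneg fun j _ => (exp_pos _).le.trans (hM n j)))
        (fun n => exp_mul_div_prod_le (hM n) S (c S))
        (tendsto_pow_atTop_nhds_zero_of_lt_one (exp_pos _).le (exp_lt_one_iff.2 gap))
  simpa using tendsto_finsetSum univ fun S _ => limit S

lemma exists_pos_le_forall_add_mul_lt {ι : Type*} [Finite ι] {a b r : ι → ℝ} {P : ι → Prop}
    (h : ∀ i, P i → a i < r i) {δ : ℝ} (hδ : 0 < δ) :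
    ∃ δ', 0 < δ' ∧ δ' ≤ δ ∧ ∀ i, P i → a i + b i * δ' < r i := by
  have near_zero (i : ι) : ∀ᶠ t in nhdsWithin (0 : ℝ) (Set.Ioi 0), P i → a i + b i * t < r i := by
    by_cases hi : P i
    · have continuous : ContinuousAt (fun t => a i + b i * t) 0 := by fun_prop
      filter_upwards [nhdsWithin_le_nhds
        (continuous.eventually_lt continuousAt_const (by simpa using h i hi))] with t ht _ using ht
    · exact .of_forall fun _ hi' => absurd hi' hi
  obtain ⟨δ', hlt, hδ', hle⟩ :=
    ((Filter.eventually_all.2 near_zero).and (Ioc_mem_nhdsGT hδ)).exists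
  exact ⟨δ', hδ', hle, hlt⟩

end Rates

section Covering

variable {k : ℕ} {Ω₀ B : Type*} {A : Fin k → Type*}
  [Fintype Ω₀] [Fintype B] [∀ j, Fintype (A j)]
  [DecidableEq Ω₀] [DecidableEq B] [∀ j, DecidableEq (A j)]
  {p : Ω₀ × (∀ j, A j) × B → ℝ}

open scoped Classical in
lemma IsCodebook.two_mul_sum_supportedTypical_sub_le {n : ℕ} {δ : ℝ} (hp : ∀ z, 0 ≤ p z)
    (hp1 : ∑ z, p z = 1) {I : Fin k → Type*} [∀ j, Fintype (I j)] [∀ j, DecidableEq (I j)]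
    [∀ j, Nonempty (I j)] {μ : (Fin n → Ω₀) × (∀ j, I j → Fin n → A j) × (Fin n → B) → ℝ}
    (h : IsCodebook μ codewordTuple (fun S z => ∏ i, codeMarg p S (z i))
      fun S z z' => ∀ i, AgreeOn S (z i) (z' i)) :
    2 * ∑ z with z ∈ supportedTypical p n δ, ∏ i, p (z i)
        - ∑ S : Finset (Fin k), exp (n * (coverRate p S + 4 * #S * δ))
          / ∏ j ∈ S, (Fintype.card (I j) : ℝ)
      ≤ ∑ ω with ∃ m, codewordTuple m ω ∈ supportedTypical p n δ, μ ω := by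
  set G : (Fin n → Ω₀ × (∀ j, A j) × B) → ℝ :=
    fun z => if z ∈ supportedTypical p n δ then ∏ i, p (z i) else 0
  have prod_nonneg (z : Fin n → Ω₀ × (∀ j, A j) × B) : 0 ≤ ∏ i, p (z i) :=
    Finset.prod_nonneg fun _ _ => hp _
  have G_nonneg (z) : 0 ≤ G z := ite_nonneg (prod_nonneg z) le_rfl
  have G_le (z) : G z ≤ ∏ i, p (z i) := by
    unfold G
    split_ifs
    exacts [le_rfl, prod_nonneg z]
  have mem_of_ne_zero {z} (hz : G z ≠ 0) : z ∈ supportedTypical p n δ :=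
    by_contra fun h => hz (if_neg h)
  have bound (S : Finset (Fin k)) (z) (hz : G z ≠ 0) :
      ∑ z' with ∀ i, AgreeOn S (z i) (z' i), G z'
        ≤ exp (n * (coverRate p S + 4 * #S * δ)) * ∏ i, codeMarg p S (z i) := by
    refine le_trans ?_ (prod_wMarg_le hp (mem_of_ne_zero hz) S)
    refine (Finset.sum_le_sum fun z' _ => G_le z').trans_eq ?_
    simp only [wMarg_eq_sum_agreeOn]
    convert sum_prod_filter_forall_rel p (AgreeOn S) z
  have success := h.two_mul_sum_sub_le G_nonneg
    ((Finset.sum_le_sum fun z _ => G_le z).trans_eq (sum_prod_eq_one hp1))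
    (fun S z hz => Finset.prod_pos fun i _ => codeMarg_pos hp ((mem_of_ne_zero hz).2 i) S)
    (fun S => (exp_pos _).le) bound
  rw [Finset.sum_filter]
  exact success.trans (Finset.sum_le_sum_of_subset_of_nonneg
    (monotone_filter_right _ fun _ _ hω => hω.imp fun _ => mem_of_ne_zero)
    fun ω _ _ => h.nonneg ω)


end Covering

open scoped Classical in
theorem covering_stmt18_general
    {k : ℕ} {Ω₀ B : Type*} {A : Fin k → Type*}
    [Fintype Ω₀] [Fintype B] [∀ j, Fintype (A j)]
    [DecidableEq Ω₀] [DecidableEq B] [∀ j, DecidableEq (A j)]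
    {p : Ω₀ × (∀ j, A j) × B → ℝ} (hp : ∀ z, 0 ≤ p z) (hp1 : ∑ z, p z = 1)
    {δ : ℝ} (hδ : 0 < δ) {R : Fin k → ℝ} {M : ℕ → Fin k → ℕ}
    (hM : ∀ (n : ℕ) (j : Fin k), exp (n * R j) ≤ M n j)
    {μ : ∀ n : ℕ, (Fin n → Ω₀) × (∀ j, Fin (M n j) → Fin n → A j) × (Fin n → B) → ℝ}
    (hμ0 : ∀ n ω, 0 ≤ μ n ω) (hμ1 : ∀ n, ∑ ω, μ n ω = 1)
    (hlaw : ∀ (n : ℕ) (m : ∀ j, Fin (M n j)) (u : Fin n → Ω₀) (x : ∀ j, Fin n → A j)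
        (v : Fin n → B),
      ∑ ω with ω.1 = u ∧ (∀ j, ω.2.1 j (m j) = x j) ∧ ω.2.2 = v, μ n ω
        = ∏ i, (pr0 p (u i) * (∏ j, pr0j p j (u i) (x j i) / pr0 p (u i)) *
            (pr0B p (u i) (v i) / pr0 p (u i))))
    (hpair : ∀ (n : ℕ) (m m' : ∀ j, Fin (M n j)), m ≠ m' →
      ∀ (u : Fin n → Ω₀) (x x' : ∀ j, Fin n → A j) (v : Fin n → B),
        (∀ j, m j = m' j → x j = x' j) →
      ∑ ω with ω.1 = u ∧ (∀ j, ω.2.1 j (m j) = x j) ∧ (∀ j, ω.2.1 j (m' j) = x' j) ∧ ω.2.2 = v,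
          μ n ω
        = ∏ i, (pr0 p (u i) * (pr0B p (u i) (v i) / pr0 p (u i)) *
            (∏ j, pr0j p j (u i) (x j i) / pr0 p (u i)) *
            ∏ j with m j ≠ m' j, pr0j p j (u i) (x' j i) / pr0 p (u i)))
    (hR : ∀ S : Finset (Fin k), S.Nonempty → coverRate p S < ∑ j ∈ S, R j) :
    Filter.Tendsto (fun n : ℕ => ∑ ω with ∃ m, codewordTuple m ω ∈ supportedTypical p n δ, μ n ω)
      Filter.atTop (nhds 1) := by
  obtain ⟨δ', hδ', hle, hR'⟩ :=
    exists_pos_le_forall_add_mul_lt (b := fun S : Finset (Fin k) => 4 * (#S : ℝ)) hR hδ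
  have lower := ((tendsto_sum_supportedTypical hp hp1 hδ').const_mul 2).sub
    (tendsto_sum_exp_mul_div_prod hM (c := fun S => coverRate p S + 4 * #S * δ')
      (by simp [coverRate_empty]) hR')
  norm_num only at lower
  refine tendsto_of_tendsto_of_tendsto_of_le_of_le lower tendsto_const_nhds
    (fun n => ?_) fun n => ?_
  · have (j : Fin k) : Nonempty (Fin (M n j)) :=
      Fin.pos_iff_nonempty.1 (by exact_mod_cast (exp_pos _).trans_le (hM n j))
    have codebook := isCodebook_codewordTuple hp (hμ0 n) (hlaw n) (hpair n)
    have bound := codebook.two_mul_sum_supportedTypical_sub_le hp hp1 (δ := δ')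
    simp only [Fintype.card_fin] at bound
    exact bound.trans (Finset.sum_le_sum_of_subset_of_nonneg (monotone_filter_right _
      fun _ _ hω => hω.imp fun _ hm => supportedTypical_mono hle hm) fun ω _ _ => hμ0 n ω)
  · rw [← hμ1 n]
    exact Finset.sum_le_sum_of_subset_of_nonneg (filter_subset _ _) fun ω _ _ => hμ0 n ω

open scoped Classical in
/-- **Multivariate covering lemma (direct part, weak typicality).**
Let `p(u₀,…,u_{k+1})` be a full-support joint pmf on finite alphabets and
`δ > 0`.  For each blocklength `n`, codebooks `{U_jⁿ(m_j)}_{m_j ∈ [M_n j]}`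
with `M_n j ≥ e^{nR_j}` are generated so that Assumptions I and II hold:
each `m`-indexed tuple is `n` i.i.d. copies of a tuple with law
`p(u₀)·∏_j p(u_j|u₀)·p(u_{k+1}|u₀)`, and for distinct `m, m'` with agreement
set `S = {j : m_j = m'_j}` the conditional pairwise law is
`∏_j p(u_j|u₀)·∏_{j∈Sᶜ} p(u'_j|u₀)` per symbol.  If for every nonempty
`S ⊆ [k]`,
`∑_{j∈S} R_j > ∑_{j∈S} H(U_j|U₀) − H(U_S|U₀,U_{k+1}) + (8k − 2|S| + 10)δ`,
then `P(∃ m : (U₀ⁿ, U₁ⁿ(m₁),…,U_kⁿ(m_k), U_{k+1}ⁿ) ∈ A_δ^{(n)}) → 1`. -/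
theorem covering_stmt18
    {k : ℕ} {Ω₀ B : Type*} {A : Fin k → Type*}
    [Fintype Ω₀] [Fintype B] [∀ j, Fintype (A j)]
    [DecidableEq Ω₀] [DecidableEq B] [∀ j, DecidableEq (A j)]
    (p : Ω₀ × (∀ j, A j) × B → ℝ)
    (hp : ∀ z, 0 < p z) (hp1 : ∑ z, p z = 1)
    (δ : ℝ) (hδ : 0 < δ)
    (R : Fin k → ℝ)
    (M : ℕ → Fin k → ℕ)
    (hM : ∀ (n : ℕ) (j : Fin k), Real.exp ((n : ℝ) * R j) ≤ (M n j : ℝ))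
    (μ : ∀ n : ℕ,
      (Fin n → Ω₀) × (∀ j, Fin (M n j) → Fin n → A j) × (Fin n → B) → ℝ)
    (hμ0 : ∀ n ω, 0 ≤ μ n ω) (hμ1 : ∀ n, ∑ ω, μ n ω = 1)
    -- Assumption II: each `m`-indexed tuple is i.i.d. across time with law
    -- `p(u₀)·∏_j p(u_j|u₀)·p(u_{k+1}|u₀)`
    (hlaw : ∀ (n : ℕ) (m : ∀ j, Fin (M n j)) (u : Fin n → Ω₀)
        (x : ∀ j, Fin n → A j) (v : Fin n → B),
      ∑ ω ∈ Finset.univ.filter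
          (fun ω : (Fin n → Ω₀) × (∀ j, Fin (M n j) → Fin n → A j) × (Fin n → B) =>
            ω.1 = u ∧ (∀ j, ω.2.1 j (m j) = x j) ∧ ω.2.2 = v), μ n ω
        = ∏ i, (pr0 p (u i) * (∏ j, pr0j p j (u i) (x j i) / pr0 p (u i)) *
            (pr0B p (u i) (v i) / pr0 p (u i))))
    -- Assumption I: pairwise conditional independence across distinct `m, m'`
    (hpair : ∀ (n : ℕ) (m m' : ∀ j, Fin (M n j)), m ≠ m' →
      ∀ (u : Fin n → Ω₀) (x x' : ∀ j, Fin n → A j) (v : Fin n → B),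
        (∀ j, m j = m' j → x j = x' j) →
      ∑ ω ∈ Finset.univ.filter
          (fun ω : (Fin n → Ω₀) × (∀ j, Fin (M n j) → Fin n → A j) × (Fin n → B) =>
            ω.1 = u ∧ (∀ j, ω.2.1 j (m j) = x j) ∧
              (∀ j, ω.2.1 j (m' j) = x' j) ∧ ω.2.2 = v), μ n ω
        = ∏ i, (pr0 p (u i) * (pr0B p (u i) (v i) / pr0 p (u i)) *
            (∏ j, pr0j p j (u i) (x j i) / pr0 p (u i)) *
            ∏ j ∈ Finset.univ.filter (fun j => m j ≠ m' j),
              pr0j p j (u i) (x' j i) / pr0 p (u i)))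
    -- rate condition
    (hR : ∀ S : Finset (Fin k), S.Nonempty →
      (∑ j ∈ S, R j) >
        (∑ j ∈ S, (wEnt p true {j} false - wEnt p true ∅ false)) -
          (wEnt p true S true - wEnt p true ∅ true) +
          (8 * (k : ℝ) - 2 * (S.card : ℝ) + 10) * δ) :
    Filter.Tendsto (fun n : ℕ =>
      ∑ ω ∈ Finset.univ.filter
          (fun ω : (Fin n → Ω₀) × (∀ j, Fin (M n j) → Fin n → A j) × (Fin n → B) =>
            ∃ m : ∀ j, Fin (M n j),
              (fun i => ((ω.1 i, fun j => ω.2.1 j (m j) i, ω.2.2 i) :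
                Ω₀ × (∀ j, A j) × B)) ∈ wTypical p n δ), μ n ω)
      Filter.atTop (nhds 1) := by
  simp only [← supportedTypical_eq_wTypical hp]
  refine covering_stmt18_general (fun z => (hp z).le) hp1 hδ hM hμ0 hμ1 hlaw hpair fun S hS => ?_
  have card_le : (#S : ℝ) ≤ k := by exact_mod_cast card_finset_fin_le S
  have slack : 0 ≤ (8 * (k : ℝ) - 2 * #S + 10) * δ := mul_nonneg (by linarith) hδ.le
  unfold coverRate
  linarith [hR S hS]
end
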